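/- arXiv:2407.09558 — 3 statements merged into one kernel-verified Lean document; each statement's English description precedes it below -/
import Mathlib

section
/- The only pairs of positive integers (x, y) satisfying y² = 8x⁴ - 4 are (x, y) = (1, 2) and (x, y) = (13, 478); that is, {(x, y) ∈ ℤ² : x ≥ 1, y ≥ 1, y² = 8x⁴ - 4} = {(1, 2), (13, 478)}. -/
/-!
If `z ^ 2 + 1 = 2 * x ^ 4`, unique factorization in `ℤ[i]` gives, up to the sign of `z`, a Gaussian
integer `δ` of norm `x` with `(1 + i) * δ ^ 4 = z + i`. By Machin's relations
`(3 - 2i) ^ 4 * (239 - i) = -13 ^ 4 * (1 + i)` and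
`(5 + i) ^ 4 * (239 - i) = 4 * 13 ^ 4 * (1 + i)`, one of `α = (3 - 2i) * δ` and `α = (5 + i) * δ` is
such that `α ^ 4` is nearly parallel to `239 + i`: the argument of `α` is extremely close to a
quarter of the argument of `239 + i`, up to a multiple of a right angle. That angle cannot be so
well approximated when `α` is large, by the hypergeometric method. Its Padé approximants come from
Jacobi polynomials with parameters `(1 / 4, -1 / 4)`, and are Gaussian integers `U n` of moderate
size. An integral representation shows that their error is small, and a Casoratian shows that two
consecutive ones are not parallel, so that `α * U n` has nonzero, hence not small, imaginary part
for one of them. This bounds `x` by `3 * 10 ^ 11`, and only 33 solutions of the Pell equation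
`z ^ 2 + 1 = 2 * X ^ 2` remain to be tested for `X` being a square.
-/

open Finset Polynomial
open scoped Nat ComplexConjugate

/-! ### Jacobi polynomials with parameters `(1 / 4, -1 / 4)` -/

theorem dvd_prod_arithmeticProgression {d o m : ℕ} (a : ℕ) (hd : d.Coprime o) (ho : o ∣ m !) :
    o ∣ ∏ i ∈ range m, (a + d * i) := by
  let b : ℕ := ((a : ZMod o) * (d : ZMod o)⁻¹).val
  have hb : (a : ZMod o) = d * b := by
    have : NeZero o := ⟨ne_zero_of_dvd_ne_zero m.factorial_ne_zero ho⟩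
    rw [ZMod.natCast_zmod_val, mul_left_comm, ZMod.coe_mul_inv_eq_one d hd, mul_one]
  have hmod : ((∏ i ∈ range m, (a + d * i) : ℕ) : ZMod o) =
      d ^ m * (b.ascFactorial m : ℕ) := by
    rw [Nat.ascFactorial_eq_prod_range]
    push_cast
    rw [← card_range m, ← prod_const, card_range, ← prod_mul_distrib]
    exact prod_congr rfl fun i _ ↦ by rw [hb]; ring
  rw [← ZMod.natCast_eq_zero_iff, hmod,
    (ZMod.natCast_eq_zero_iff _ _).2 (ho.trans (b.factorial_dvd_ascFactorial m)), mul_zero]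

theorem factorial_dvd_two_pow_mul_prod (a j m : ℕ) :
    m ! ∣ 2 ^ m * ∏ i ∈ range m, (a + 2 ^ j * i) := by
  obtain ⟨e, o, ho, hm⟩ := Nat.exists_eq_two_pow_mul_odd m.factorial_ne_zero
  have he : e ≤ m := by
    rcases eq_or_ne m 0 with rfl | hm0
    · simpa using (Nat.eq_one_of_mul_eq_one_right hm.symm)
    · exact_mod_cast (le_emultiplicity_of_pow_dvd ⟨o, hm⟩).trans
        (Nat.emultiplicity_two_factorial_lt hm0).le
  rw [hm]
  exact mul_dvd_mul (pow_dvd_pow 2 he) <|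
    dvd_prod_arithmeticProgression a ((Nat.coprime_two_left.2 ho).pow_left j) ⟨2 ^ e, by
      rw [hm, mul_comm]⟩

/-- The generalized binomial coefficient `8 ^ m * binom (k + m + 1 / 4) m`. The division is exact,
by `factorial_dvd_two_pow_mul_prod`. -/
def scaledChoose (k m : ℕ) : ℕ :=
  2 ^ m * (∏ i ∈ range m, (4 * k + 5 + 2 ^ 2 * i)) / m !

theorem scaledChoose_mul_factorial (k m : ℕ) :
    scaledChoose k m * m ! = 2 ^ m * ∏ i ∈ range m, (4 * k + 5 + 2 ^ 2 * i) :=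
  Nat.div_mul_cancel (factorial_dvd_two_pow_mul_prod _ 2 m)

theorem scaledChoose_zero_right (k : ℕ) : scaledChoose k 0 = 1 := by
  simp [scaledChoose]

theorem succ_mul_scaledChoose_succ (k m : ℕ) :
    (m + 1) * scaledChoose k (m + 1) = (8 * (k + m) + 10) * scaledChoose k m := by
  apply Nat.eq_of_mul_eq_mul_right m.factorial_pos
  calc (m + 1) * scaledChoose k (m + 1) * m !
      = scaledChoose k (m + 1) * (m + 1)! := by rw [Nat.factorial_succ]; ring
    _ = (8 * (k + m) + 10) * (scaledChoose k m * m !) := by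
      rw [scaledChoose_mul_factorial, scaledChoose_mul_factorial, prod_range_succ]; ring
    _ = _ := by ring

theorem mul_scaledChoose_succ_left (k m : ℕ) :
    (8 * k + 10) * scaledChoose (k + 1) m = (8 * (k + m) + 10) * scaledChoose k m := by
  apply Nat.eq_of_mul_eq_mul_right m.factorial_pos
  have hprod : (4 * k + 5) * ∏ i ∈ range m, (4 * (k + 1) + 5 + 2 ^ 2 * i) =
      (∏ i ∈ range m, (4 * k + 5 + 2 ^ 2 * i)) * (4 * k + 5 + 2 ^ 2 * m) := by
    rw [← prod_range_succ, prod_range_succ', mul_comm, mul_zero, add_zero]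
    exact congrArg (· * _) (prod_congr rfl fun i _ ↦ by ring)
  calc (8 * k + 10) * scaledChoose (k + 1) m * m !
      = (8 * k + 10) * (scaledChoose (k + 1) m * m !) := by ring
    _ = 2 * 2 ^ m * ((4 * k + 5) * ∏ i ∈ range m, (4 * (k + 1) + 5 + 2 ^ 2 * i)) := by
      rw [scaledChoose_mul_factorial]; ring
    _ = (8 * (k + m) + 10) * (scaledChoose k m * m !) := by
      rw [hprod, scaledChoose_mul_factorial]; ring
    _ = _ := by ring

/-- The coefficient of `w ^ k` in `scaledJacobi n`. -/
def jacobiCoeff (n k : ℕ) : ℕ :=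
  if k ≤ n then (n + k).choose k * scaledChoose k (n - k) else 0

theorem jacobiCoeff_add (k m : ℕ) :
    jacobiCoeff (k + m) k = (k + m + k).choose k * scaledChoose k m := by
  simp [jacobiCoeff]

theorem jacobiCoeff_of_lt {n k : ℕ} (h : n < k) : jacobiCoeff n k = 0 :=
  if_neg h.not_ge

theorem jacobiCoeff_succ_left (n k : ℕ) :
    ((n : ℤ) + 1) * (n + 1 - k) * jacobiCoeff (n + 1) k =
      (n + 1 + k) * (8 * n + 10) * jacobiCoeff n k := by
  rcases lt_trichotomy k (n + 1) with hlt | rfl | hgt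
  · obtain ⟨m, rfl⟩ := Nat.exists_eq_add_of_le (Nat.lt_succ_iff.1 hlt)
    have hchoose := Nat.choose_mul_succ_eq (k + m + k) k
    rw [show k + m + k + 1 - k = k + m + 1 by lia] at hchoose
    have hscaled := succ_mul_scaledChoose_succ k m
    rw [add_assoc, jacobiCoeff_add, jacobiCoeff_add,
      show k + (m + 1) + k = k + m + k + 1 by ring]
    zify at hchoose hscaled
    push_cast
    linear_combination (-(m + 1) * (scaledChoose k (m + 1) : ℤ)) * hchoose +
      ((k + m + k).choose k * (k + m + k + 1) : ℤ) * hscaled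
  · simp [jacobiCoeff_of_lt n.lt_succ_self]
  · simp [jacobiCoeff_of_lt hgt, jacobiCoeff_of_lt (n.lt_succ_self.trans hgt)]

theorem jacobiCoeff_succ_succ (n k : ℕ) :
    ((n : ℤ) + 1) * ((k + 1) * (8 * k + 10)) * jacobiCoeff (n + 1) (k + 1) =
      (n + k + 2) * (n + k + 1) * (8 * n + 10) * jacobiCoeff n k := by
  rcases le_or_gt k n with hle | hgt
  · obtain ⟨m, rfl⟩ := Nat.exists_eq_add_of_le hle
    have hchoose := Nat.choose_mul_succ_eq (k + m + k) k
    rw [show k + m + k + 1 - k = k + m + 1 by lia] at hchoose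
    have hchoose' := Nat.add_one_mul_choose_eq (k + m + k + 1) k
    have hscaled := mul_scaledChoose_succ_left k m
    rw [show k + m + 1 = k + 1 + m by ring, jacobiCoeff_add, jacobiCoeff_add,
      show k + 1 + m + (k + 1) = k + m + k + 1 + 1 by ring]
    zify at hchoose hchoose' hscaled
    push_cast
    linear_combination
      (-((k + m + 1 : ℤ) * (8 * k + 10) * scaledChoose (k + 1) m)) * hchoose' -
        ((k + m + k + 1 + 1 : ℤ) * (8 * k + 10) * scaledChoose (k + 1) m) * hchoose +
        ((k + m + k + 1 + 1 : ℤ) * (k + m + k + 1) * (k + m + k).choose k) * hscaled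
  · simp [jacobiCoeff_of_lt hgt, jacobiCoeff_of_lt (Nat.succ_lt_succ hgt)]

theorem jacobiCoeff_recurrence_zero (n : ℕ) :
    ((n : ℤ) + 2) * (n + 1) * jacobiCoeff (n + 2) 0 =
      (n + 1) * (2 * n + 3) * (8 * jacobiCoeff (n + 1) 0) -
        4 * (4 * n + 3) * (4 * n + 5) * jacobiCoeff n 0 := by
  have h₁ := jacobiCoeff_succ_left n 0
  have h₂ := jacobiCoeff_succ_left (n + 1) 0
  push_cast at h₁ h₂
  apply mul_left_cancel₀ (show (n + 1 : ℤ) * (n + 2) ≠ 0 by positivity)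
  linear_combination (n + 1 : ℤ) ^ 2 * h₂ - (8 * n + 6) * (n + 2) * h₁

theorem jacobiCoeff_recurrence_succ (n k : ℕ) :
    ((n : ℤ) + 2) * (n + 1) * jacobiCoeff (n + 2) (k + 1) =
      (n + 1) * (2 * n + 3) * (8 * jacobiCoeff (n + 1) (k + 1) + 2 * jacobiCoeff (n + 1) k) -
        4 * (4 * n + 3) * (4 * n + 5) * jacobiCoeff n (k + 1) := by
  have hdiag := jacobiCoeff_succ_succ (n + 1) k
  have hleft := jacobiCoeff_succ_left n (k + 1)
  have hright : ((k : ℤ) + 1) * (8 * k + 10) * jacobiCoeff (n + 1) (k + 1) =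
      (n + k + 2) * (n + 1 - k) * jacobiCoeff (n + 1) k := by
    apply mul_left_cancel₀ (show (n + 1 : ℤ) ≠ 0 by positivity)
    linear_combination jacobiCoeff_succ_succ n k - (n + k + 2 : ℤ) * jacobiCoeff_succ_left n k
  push_cast at hdiag hleft
  apply mul_left_cancel₀ (show ((k : ℤ) + 1) * (8 * k + 10) * (n + k + 2) ≠ 0 by positivity)
  linear_combination (n + 1 : ℤ) * (n + k + 2) * hdiag -
    (8 * n + 6) * (k + 1) * (8 * k + 10) * hleft +
    ((n + 1 : ℤ) * (8 * n + 6) * (n - k) - 8 * (n + 1) * (2 * n + 3) * (n + k + 2)) * hright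

/-- The polynomial `8 ^ n * P_n (1 + w / 4)` in `w`, where `P_n` is the Jacobi polynomial with
parameters `(1 / 4, -1 / 4)`. It has integer coefficients. -/
noncomputable def scaledJacobi (n : ℕ) : ℤ[X] :=
  ∑ k ∈ range (n + 1), monomial k (jacobiCoeff n k : ℤ)

theorem coeff_scaledJacobi (n k : ℕ) : (scaledJacobi n).coeff k = jacobiCoeff n k := by
  simp +contextual [scaledJacobi, coeff_monomial, jacobiCoeff]

theorem scaledJacobi_recurrence (n : ℕ) :
    ((n + 2) * (n + 1) : ℤ) • scaledJacobi (n + 2) =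
      ((n + 1) * (2 * n + 3) : ℤ) • ((8 + X * 2) * scaledJacobi (n + 1)) -
        (4 * (4 * n + 3) * (4 * n + 5) : ℤ) • scaledJacobi n := by
  ext k
  simp only [coeff_sub, coeff_smul, smul_eq_mul, add_mul (8 : ℤ[X]), mul_assoc X, coeff_add,
    coeff_ofNat_mul]
  cases k with
  | zero => simpa [coeff_scaledJacobi] using jacobiCoeff_recurrence_zero n
  | succ k => simpa [coeff_scaledJacobi, coeff_X_mul] using jacobiCoeff_recurrence_succ n k

/-- The recurrence of `8 ^ n * P_n`, with `P_n` the Jacobi polynomial with parameters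
`(1 / 4, -1 / 4)`, at an imaginary argument `t * i`, after division of the `n`-th term
by `i ^ n`. -/
def IsJacobiRecurrence {E : Type*} [AddCommGroup E] [Module ℝ E] (t : ℝ) (u : ℕ → E) : Prop :=
  ∀ n : ℕ, (((n : ℝ) + 2) * (n + 1)) • u (n + 2) =
    (8 * t * ((n + 1) * (2 * n + 3))) • u (n + 1) + (4 * (4 * (n : ℝ) + 3) * (4 * n + 5)) • u n

namespace IsJacobiRecurrence

variable {t : ℝ}

theorem map {E F : Type*} [AddCommGroup E] [Module ℝ E] [AddCommGroup F] [Module ℝ F] {u : ℕ → E}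
    (hu : IsJacobiRecurrence t u) (L : E →ₗ[ℝ] F) : IsJacobiRecurrence t (fun n ↦ L (u n)) := by
  intro n
  simpa only [map_add, map_smul] using congrArg L (hu n)

theorem norm_le_pow {E : Type*} [NormedAddCommGroup E] [NormedSpace ℝ E] {u : ℕ → E} {A : ℝ}
    (hu : IsJacobiRecurrence t u) (hA : 0 ≤ A) (hroot : 16 * |t| * A + 64 ≤ A ^ 2)
    (h0 : ‖u 0‖ ≤ 1) (h1 : ‖u 1‖ ≤ A) (n : ℕ) : ‖u n‖ ≤ A ^ n := by
  induction n using Nat.twoStepInduction with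
  | zero => simpa using h0
  | one => simpa using h1
  | more n ih₀ ih₁ =>
    refine le_of_mul_le_mul_left ?_ (show 0 < ((n : ℝ) + 2) * (n + 1) by positivity)
    calc ((n : ℝ) + 2) * (n + 1) * ‖u (n + 2)‖
        = ‖(((n : ℝ) + 2) * (n + 1)) • u (n + 2)‖ := by
          rw [norm_smul, Real.norm_of_nonneg (by positivity)]
      _ ≤ 8 * |t| * ((n + 1) * (2 * n + 3)) * ‖u (n + 1)‖ +
            4 * (4 * n + 3) * (4 * n + 5) * ‖u n‖ := by
          rw [hu n]
          refine (norm_add_le _ _).trans_eq ?_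
          rw [norm_smul, norm_smul, Real.norm_eq_abs, Real.norm_of_nonneg (by positivity), abs_mul,
            abs_mul, abs_of_pos (show (0 : ℝ) < 8 by norm_num),
            abs_of_pos (show 0 < ((n : ℝ) + 1) * (2 * n + 3) by positivity)]
      _ ≤ 8 * |t| * ((n + 1) * (2 * (n + 2))) * A ^ (n + 1) + 64 * ((n + 2) * (n + 1)) * A ^ n := by
          gcongr ?_ * ?_ + ?_ * ?_
          · gcongr
            linarith
          · nlinarith [n.cast_nonneg (α := ℝ)]
      _ = (n + 2) * (n + 1) * A ^ n * (16 * |t| * A + 64) := by ring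
      _ ≤ (n + 2) * (n + 1) * A ^ n * A ^ 2 := by gcongr
      _ = (n + 2) * (n + 1) * A ^ (n + 2) := by ring

theorem casoratian_ne_zero {u v : ℕ → ℝ} (hu : IsJacobiRecurrence t u)
    (hv : IsJacobiRecurrence t v) (h0 : u 0 * v 1 - u 1 * v 0 ≠ 0) (n : ℕ) :
    u n * v (n + 1) - u (n + 1) * v n ≠ 0 := by
  induction n with
  | zero => exact h0
  | succ n ih =>
    have hstep : ((n : ℝ) + 2) * (n + 1) * (u (n + 1) * v (n + 2) - u (n + 2) * v (n + 1)) =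
        -(4 * (4 * n + 3) * (4 * n + 5)) * (u n * v (n + 1) - u (n + 1) * v n) := by
      have hun := hu n
      have hvn := hv n
      simp only [smul_eq_mul] at hun hvn
      linear_combination u (n + 1) * hvn - v (n + 1) * hun
    refine right_ne_zero_of_mul (hstep ▸ mul_ne_zero (neg_ne_zero.2 ?_) ih)
    positivity

end IsJacobiRecurrence

/-- The Gaussian integers `U_n = (-i) ^ n * 8 ^ n * P_n (t * i)`, with `P_n` the Jacobi polynomial
with parameters `(1 / 4, -1 / 4)`. They are the Padé approximants showing that the argument of
`conj U_n` is close to a quarter of the argument of `t + i`. -/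
noncomputable def quarterApprox (t : ℤ) (n : ℕ) : GaussianInt :=
  ⟨0, -1⟩ ^ n * aeval (⟨-4, 4 * t⟩ : GaussianInt) (scaledJacobi n)

section quarterApprox

variable (t : ℤ)

theorem quarterApprox_zero : quarterApprox t 0 = 1 := by
  simp [quarterApprox, scaledJacobi, jacobiCoeff, scaledChoose_zero_right]

theorem quarterApprox_one : quarterApprox t 1 = ⟨8 * t, -2⟩ := by
  have hV : scaledJacobi 1 = 10 + 2 * X := by
    simp [scaledJacobi, sum_range_succ, show jacobiCoeff 1 0 = 10 by decide,
      show jacobiCoeff 1 1 = 2 by decide, ← C_mul_X_eq_monomial]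
  rw [quarterApprox, hV, map_add, map_mul, aeval_X, map_ofNat, map_ofNat]
  apply Zsqrtd.ext
  · simp only [pow_one, Zsqrtd.re_mul, Zsqrtd.re_add, Zsqrtd.im_add, Zsqrtd.im_mul, Zsqrtd.re_ofNat,
      Zsqrtd.im_ofNat]
    ring
  · simp

theorem isJacobiRecurrence_quarterApprox :
    IsJacobiRecurrence t (fun n ↦ (quarterApprox t n : ℂ)) := by
  intro n
  let V (m : ℕ) : ℂ := GaussianInt.toComplex (aeval ⟨-4, 4 * t⟩ (scaledJacobi m))
  have hU (m : ℕ) : (quarterApprox t m : ℂ) = (-Complex.I) ^ m * V m := by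
    simp [quarterApprox, V, GaussianInt.toComplex_def']
  have hV : ((n : ℂ) + 2) * (n + 1) * V (n + 2) =
      (n + 1) * (2 * n + 3) * (8 * t * Complex.I * V (n + 1)) -
        4 * (4 * n + 3) * (4 * n + 5) * V n := by
    have h := congrArg (fun p ↦ GaussianInt.toComplex (aeval ⟨-4, 4 * t⟩ p))
      (scaledJacobi_recurrence n)
    simp only [map_sub, map_mul, map_add, map_zsmul, aeval_X, map_ofNat] at h
    simp only [zsmul_eq_mul, GaussianInt.toComplex_def'] at h
    push_cast at h
    linear_combination h
  simp only [hU, Complex.real_smul]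
  push_cast
  linear_combination (-Complex.I) ^ n * Complex.I ^ 2 * hV +
    (-Complex.I) ^ n * ((n + 1) * (2 * n + 3) * (8 * t * Complex.I * V (n + 1)) -
      4 * (4 * n + 3) * (4 * n + 5) * V n) * Complex.I_sq

theorem norm_quarterApprox_le {A : ℝ} (hA : 0 ≤ A) (hroot : 16 * |(t : ℝ)| * A + 64 ≤ A ^ 2)
    (n : ℕ) : ‖(quarterApprox t n : ℂ)‖ ≤ A ^ n := by
  refine (isJacobiRecurrence_quarterApprox t).norm_le_pow hA hroot ?_ ?_ n
  · simp [quarterApprox_zero]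
  · have htA : 16 * |(t : ℝ)| ≤ A := by nlinarith
    rw [quarterApprox_one, Complex.norm_def, Real.sqrt_le_left hA, Complex.normSq_apply,
      GaussianInt.re_toComplex, GaussianInt.im_toComplex]
    push_cast
    nlinarith [abs_nonneg (t : ℝ), sq_abs (t : ℝ)]

theorem exists_im_mul_quarterApprox_ne_zero {α : GaussianInt} (hα : α ≠ 0) (n : ℕ) :
    ∃ m, n ≤ m ∧ m ≤ n + 1 ∧ (α * quarterApprox t m).im ≠ 0 := by
  set U := quarterApprox t
  have hdet : (U n).re * (U (n + 1)).im - (U (n + 1)).re * (U n).im ≠ 0 := by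
    have h := (isJacobiRecurrence_quarterApprox t)
    have hre := h.map Complex.reLm
    have him := h.map Complex.imLm
    have := hre.casoratian_ne_zero him (by simp [quarterApprox_zero, quarterApprox_one]) n
    simp only [Complex.reLm_coe, Complex.imLm_coe, ← GaussianInt.intCast_re,
      ← GaussianInt.intCast_im] at this
    exact_mod_cast this
  by_contra! hzero
  have h₀ := hzero n le_rfl n.le_succ
  have h₁ := hzero (n + 1) n.le_succ le_rfl
  rw [Zsqrtd.im_mul] at h₀ h₁
  refine hα (Zsqrtd.ext ?_ ?_) <;> refine (mul_eq_zero.1 ?_).resolve_right hdet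
  · linear_combination (U n).re * h₁ - (U (n + 1)).re * h₀
  · linear_combination (U (n + 1)).im * h₀ - (U n).im * h₁

end quarterApprox

/-! ### The approximation error as an integral -/

/-- The partial products of Euler's product for `sin (π * z) / (π * z)`. -/
noncomputable def eulerSineProd (z : ℝ) (n : ℕ) : ℝ :=
  ∏ j ∈ range n, (1 - z ^ 2 / (j + 1) ^ 2)

theorem eulerSineProd_succ (z : ℝ) (n : ℕ) :
    (n + 1) ^ 2 * eulerSineProd z (n + 1) = ((n + 1) ^ 2 - z ^ 2) * eulerSineProd z n := by
  rw [eulerSineProd, prod_range_succ, ← eulerSineProd]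
  field_simp

theorem eulerSineProd_mem_Icc {z : ℝ} (hz : |z| ≤ 1) (n : ℕ) :
    eulerSineProd z n ∈ Set.Icc 0 1 := by
  have hfactor (j : ℕ) : z ^ 2 / ((j : ℝ) + 1) ^ 2 ≤ 1 := by
    rw [div_le_one (by positivity)]
    exact ((sq_le_one_iff_abs_le_one z).2 hz).trans (one_le_pow₀ (by simp))
  refine ⟨prod_nonneg fun j _ ↦ sub_nonneg.2 (hfactor j),
    prod_le_one (fun j _ ↦ sub_nonneg.2 (hfactor j)) fun j _ ↦ sub_le_self _ (by positivity)⟩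

/-- The integral of `(cos s - cos f) ^ n * cos (ν * s)` over `0 ≤ s ≤ f`. For `ν = 1 / 4` and
`f = arctan t⁻¹` it measures how well `quarterApprox t n` approximates a quarter of `f`. -/
noncomputable def cosIntegral (ν f : ℝ) (n : ℕ) : ℝ :=
  ∫ s in 0..f, (Real.cos s - Real.cos f) ^ n * Real.cos (ν * s)

section cosIntegral

variable (ν f : ℝ)

theorem mul_cosIntegral_zero : ν * cosIntegral ν f 0 = Real.sin (ν * f) := by
  simp [cosIntegral, intervalIntegral.mul_integral_comp_mul_left]

theorem hasDerivAt_cosIntegral_primitive (n : ℕ) (s : ℝ) :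
    HasDerivAt (fun s ↦ (n + 1) * (Real.cos s - Real.cos f) ^ n * Real.sin s * Real.cos (ν * s) -
        ν * (Real.cos s - Real.cos f) ^ (n + 1) * Real.sin (ν * s))
      (((n + 1) ^ 2 - ν ^ 2) * ((Real.cos s - Real.cos f) ^ (n + 1) * Real.cos (ν * s)) +
        (n + 1) * (2 * n + 1) * Real.cos f * ((Real.cos s - Real.cos f) ^ n * Real.cos (ν * s)) -
        (n + 1) * n * Real.sin f ^ 2 *
          ((Real.cos s - Real.cos f) ^ (n - 1) * Real.cos (ν * s))) s := by
  have hc : HasDerivAt (fun s ↦ Real.cos s - Real.cos f) (-Real.sin s) s :=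
    (Real.hasDerivAt_cos s).sub_const _
  have hν : HasDerivAt (fun s ↦ ν * s) ν s := by simpa using (hasDerivAt_id s).const_mul ν
  refine (((((hc.pow n).const_mul ((n : ℝ) + 1)).mul (Real.hasDerivAt_sin s)).mul hν.cos).sub
    (((hc.pow (n + 1)).const_mul ν).mul hν.sin)).congr_deriv ?_
  simp only [Pi.pow_apply, Pi.mul_apply, Nat.add_sub_cancel]
  push_cast
  cases n with
  | zero =>
    simp only [Nat.cast_zero, zero_add, pow_zero, pow_one]
    ring
  | succ n =>
    simp only [Nat.add_sub_cancel]
    push_cast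
    linear_combination ((n : ℝ) + 2) * (n + 1) * (Real.cos s - Real.cos f) ^ n * Real.cos (ν * s) *
      (Real.sin_sq f - Real.sin_sq s)

/-- For `n = 0` the truncated subtraction `n - 1` is harmless, as its term vanishes. -/
theorem cosIntegral_recurrence (n : ℕ) :
    ((n + 1) ^ 2 - ν ^ 2) * cosIntegral ν f (n + 1) +
        (n + 1) * (2 * n + 1) * Real.cos f * cosIntegral ν f n -
        (n + 1) * n * Real.sin f ^ 2 * cosIntegral ν f (n - 1) =
      (n + 1) * 0 ^ n * Real.sin f * Real.cos (ν * f) := by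
  have hint (c : ℝ) (m : ℕ) : IntervalIntegrable
      (fun s ↦ c * ((Real.cos s - Real.cos f) ^ m * Real.cos (ν * s))) MeasureTheory.volume 0 f :=
    Continuous.intervalIntegrable (by fun_prop) _ _
  have hFTC := intervalIntegral.integral_eq_sub_of_hasDerivAt
    (fun s _ ↦ hasDerivAt_cosIntegral_primitive ν f n s)
    (((hint _ _).add (hint _ _)).sub (hint _ _))
  rw [intervalIntegral.integral_sub ((hint _ _).add (hint _ _)) (hint _ _),
    intervalIntegral.integral_add (hint _ _) (hint _ _)] at hFTC
  simpa [cosIntegral] using hFTC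

variable {f}

theorem abs_cosIntegral_le (h0 : 0 ≤ f) (hπ : f ≤ Real.pi) (n : ℕ) :
    |cosIntegral ν f n| ≤ (1 - Real.cos f) ^ n * f := by
  have hbound : ∀ s ∈ Set.uIoc 0 f,
      ‖(Real.cos s - Real.cos f) ^ n * Real.cos (ν * s)‖ ≤ (1 - Real.cos f) ^ n := by
    intro s hs
    rw [Set.uIoc_of_le h0] at hs
    have hcos : 0 ≤ Real.cos s - Real.cos f :=
      sub_nonneg.2 (Real.cos_le_cos_of_nonneg_of_le_pi hs.1.le hπ hs.2)
    calc ‖(Real.cos s - Real.cos f) ^ n * Real.cos (ν * s)‖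
        = (Real.cos s - Real.cos f) ^ n * |Real.cos (ν * s)| := by
          rw [norm_mul, norm_pow, Real.norm_of_nonneg hcos, Real.norm_eq_abs]
      _ ≤ (1 - Real.cos f) ^ n * 1 := by
          gcongr
          · exact pow_nonneg (hcos.trans (by simpa using Real.cos_le_one s)) n
          · exact Real.cos_le_one s
          · exact Real.abs_cos_le_one _
      _ = (1 - Real.cos f) ^ n := mul_one _
  simpa [cosIntegral, abs_of_nonneg h0] using
    intervalIntegral.norm_integral_le_of_norm_le_const hbound

end cosIntegral

namespace IsJacobiRecurrence

variable {t f : ℝ} {u : ℕ → ℝ}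

theorem eq_cosIntegral (hu : IsJacobiRecurrence t u) (hf : Real.cos f = t * Real.sin f)
    (h0 : u 0 = Real.sin (1 / 4 * f))
    (h1 : u 1 = 8 * t * Real.sin (1 / 4 * f) - 2 * Real.cos (1 / 4 * f)) (n : ℕ) :
    4 * (-Real.sin f) ^ n * u n =
      8 ^ n * (eulerSineProd (1 / 4) n * cosIntegral (1 / 4) f n) := by
  have hJ0 := mul_cosIntegral_zero (1 / 4) f
  induction n using Nat.twoStepInduction with
  | zero =>
    simp only [eulerSineProd, range_zero, prod_empty, pow_zero]
    linear_combination 4 * h0 - 4 * hJ0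
  | one =>
    have hJ1 := cosIntegral_recurrence (1 / 4) f 0
    simp only [Nat.cast_zero, zero_add, pow_zero] at hJ1
    simp only [eulerSineProd, prod_range_one, Nat.cast_zero, zero_add, pow_one]
    linear_combination -4 * Real.sin f * h1 - 8 * hJ1 + 8 * cosIntegral (1 / 4) f 0 * hf +
      32 * t * Real.sin f * hJ0
  | more n ih₀ ih₁ =>
    have hrec := hu n
    have hJ := cosIntegral_recurrence (1 / 4) f (n + 1)
    have hprod₁ := eulerSineProd_succ (1 / 4) n
    have hprod₂ := eulerSineProd_succ (1 / 4) (n + 1)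
    simp only [smul_eq_mul] at hrec
    rw [add_assoc n 1 1, one_add_one_eq_two] at hJ hprod₂
    rw [Nat.add_sub_cancel, zero_pow n.succ_ne_zero] at hJ
    push_cast at hJ hprod₂
    apply mul_left_cancel₀ (show ((n : ℝ) + 2) ^ 2 * (n + 1) ≠ 0 by positivity)
    set S := Real.sin f
    set J := cosIntegral (1 / 4) f
    set c := eulerSineProd (1 / 4)
    linear_combination 4 * (-S) ^ (n + 2) * (n + 2) * hrec -
      8 * t * S * (n + 2) * (n + 1) * (2 * n + 3) * ih₁ +
      S ^ 2 * (n + 2) * (64 * (n + 1) ^ 2 - 4) * ih₀ -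
      (n + 1) * 8 ^ (n + 2) * J (n + 2) * hprod₂ -
      (n + 1) * 8 ^ (n + 2) * c (n + 1) * hJ -
      S ^ 2 * (n + 2) * 64 * 8 ^ n * J n * hprod₁ +
      (n + 1) * 8 ^ (n + 2) * c (n + 1) * (n + 2) * (2 * n + 3) * J (n + 1) * hf

theorem abs_le_of_cos_eq_mul_sin (hu : IsJacobiRecurrence t u) (hf : Real.cos f = t * Real.sin f)
    (hf0 : 0 < f) (hfπ : f < Real.pi) (h0 : u 0 = Real.sin (1 / 4 * f))
    (h1 : u 1 = 8 * t * Real.sin (1 / 4 * f) - 2 * Real.cos (1 / 4 * f)) (n : ℕ) :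
    |u n| ≤ (8 * ((1 - Real.cos f) / Real.sin f)) ^ n * (f / 4) := by
  have hsin : 0 < Real.sin f := Real.sin_pos_of_pos_of_lt_pi hf0 hfπ
  obtain ⟨hc0, hc1⟩ := eulerSineProd_mem_Icc (z := 1 / 4) (by norm_num [abs_of_pos]) n
  refine le_of_mul_le_mul_left ?_ (show 0 < 4 * Real.sin f ^ n by positivity)
  calc 4 * Real.sin f ^ n * |u n|
      = 8 ^ n * (eulerSineProd (1 / 4) n * |cosIntegral (1 / 4) f n|) := by
        have h := congrArg abs (hu.eq_cosIntegral hf h0 h1 n)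
        simpa only [abs_mul, abs_pow, abs_neg, abs_of_pos hsin, abs_of_nonneg hc0, Nat.abs_ofNat]
          using h
    _ ≤ 8 ^ n * (1 * ((1 - Real.cos f) ^ n * f)) := by
        gcongr
        exact abs_cosIntegral_le _ hf0.le hfπ.le n
    _ = 4 * Real.sin f ^ n * ((8 * ((1 - Real.cos f) / Real.sin f)) ^ n * (f / 4)) := by
        rw [mul_pow, div_pow]
        field_simp

end IsJacobiRecurrence

/-- The fourth root of `(t + i) / |t + i|` with the smallest argument, for `0 < t`. -/
noncomputable def quarterRoot (t : ℝ) : ℂ :=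
  Complex.exp ((Real.arctan t⁻¹ / 4 : ℝ) * Complex.I)

theorem norm_quarterRoot (t : ℝ) : ‖quarterRoot t‖ = 1 :=
  Complex.norm_exp_ofReal_mul_I _

theorem arctan_le_self {x : ℝ} (hx : 0 ≤ x) : Real.arctan x ≤ x :=
  (Real.le_tan (Real.arctan_nonneg.2 hx) (Real.arctan_lt_pi_div_two x)).trans_eq (Real.tan_arctan x)

section quarterRoot

variable {t : ℝ}

theorem cos_arctan_inv (ht : 0 < t) :
    Real.cos (Real.arctan t⁻¹) = t * Real.sin (Real.arctan t⁻¹) := by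
  rw [← Real.tan_mul_cos (Real.cos_arctan_pos _).ne', Real.tan_arctan, mul_inv_cancel_left₀ ht.ne']

theorem quarterRoot_pow_four (ht : 0 < t) :
    quarterRoot t ^ 4 = Real.sin (Real.arctan t⁻¹) * (t + Complex.I) := by
  rw [quarterRoot, ← Complex.exp_nat_mul, ← mul_assoc,
    show ((4 : ℕ) : ℂ) * (Real.arctan t⁻¹ / 4 : ℝ) = (Real.arctan t⁻¹ : ℝ) by push_cast; ring,
    Complex.exp_mul_I, ← Complex.ofReal_cos, ← Complex.ofReal_sin, cos_arctan_inv ht]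
  push_cast
  ring

theorem one_sub_cos_div_sin_arctan_inv_le (ht : 0 < t) :
    (1 - Real.cos (Real.arctan t⁻¹)) / Real.sin (Real.arctan t⁻¹) ≤ 1 / (2 * t) := by
  have hsin := Real.sin_arctan_pos.2 (inv_pos.2 ht)
  have hcos := cos_arctan_inv ht
  rw [div_le_div_iff₀ hsin (by positivity)]
  nlinarith [Real.sin_sq_add_cos_sq (Real.arctan t⁻¹), Real.cos_le_one (Real.arctan t⁻¹)]

end quarterRoot

theorem abs_im_quarterApprox_mul_quarterRoot_le {t : ℤ} (ht : 0 < t) (n : ℕ) :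
    |((quarterApprox t n : ℂ) * quarterRoot t).im| ≤ (4 / t) ^ n * (1 / (4 * t)) := by
  have ht' : 0 < (t : ℝ) := by exact_mod_cast ht
  let f := Real.arctan (t : ℝ)⁻¹
  have hf0 : 0 < f := Real.arctan_pos.2 (inv_pos.2 ht')
  have hft : f ≤ (t : ℝ)⁻¹ := arctan_le_self (inv_pos.2 ht').le
  have hre : (quarterRoot t).re = Real.cos (1 / 4 * f) := by
    rw [quarterRoot, Complex.exp_ofReal_mul_I_re, div_eq_inv_mul, one_div]
  have him : (quarterRoot t).im = Real.sin (1 / 4 * f) := by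
    rw [quarterRoot, Complex.exp_ofReal_mul_I_im, div_eq_inv_mul, one_div]
  have hrec := (isJacobiRecurrence_quarterApprox t).map
    (Complex.imLm ∘ₗ LinearMap.mulRight ℝ (quarterRoot t))
  have hsmall := hrec.abs_le_of_cos_eq_mul_sin (cos_arctan_inv ht') hf0
    ((Real.arctan_lt_pi_div_two _).trans (by linarith [Real.pi_pos]))
    (by simp [quarterApprox_zero, him, f])
    (by
      simp only [quarterApprox_one, LinearMap.comp_apply, LinearMap.mulRight_apply,
        Complex.imLm_coe, Complex.mul_im, GaussianInt.re_toComplex, GaussianInt.im_toComplex,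
        him, hre]
      push_cast
      ring) n
  calc |((quarterApprox t n : ℂ) * quarterRoot t).im|
      ≤ (8 * ((1 - Real.cos f) / Real.sin f)) ^ n * (f / 4) := hsmall
    _ ≤ (8 * (1 / (2 * t))) ^ n * ((t : ℝ)⁻¹ / 4) := by
        have := one_sub_cos_div_sin_arctan_inv_le ht'
        have := Real.sin_arctan_pos.2 (inv_pos.2 ht')
        gcongr
        exact mul_nonneg (by simp) (div_nonneg (by linarith [Real.cos_le_one f]) (by positivity))
    _ = (4 / t) ^ n * (1 / (4 * t)) := by
        rw [show 8 * (1 / (2 * (t : ℝ))) = 4 / t by ring]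
        ring

/-! ### Irrationality measure -/

theorem one_le_abs_im_mul_norm_add_norm_mul_abs_im {α U : GaussianInt} {ω : ℂ} (hω : ‖ω‖ = 1)
    (hU : (α * U).im ≠ 0) :
    1 ≤ |((α : ℂ) * conj ω).im| * ‖(U : ℂ)‖ + ‖(α : ℂ)‖ * |((U : ℂ) * ω).im| := by
  have hunit : ω * conj ω = 1 := by simp [Complex.mul_conj', hω]
  have him : ((α * U).im : ℝ) = ((α : ℂ) * conj ω).im * ((U : ℂ) * ω).re +
      ((α : ℂ) * conj ω).re * ((U : ℂ) * ω).im := by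
    have h : ((α * U : GaussianInt) : ℂ) = (α * conj ω) * (U * ω) := by
      rw [map_mul]
      linear_combination -(α * U : ℂ) * hunit
    rw [GaussianInt.intCast_im, h, Complex.mul_im]
    ring
  calc (1 : ℝ) ≤ |((α * U).im : ℝ)| := by exact_mod_cast Int.one_le_abs hU
    _ ≤ |((α : ℂ) * conj ω).im| * |((U : ℂ) * ω).re| +
          |((α : ℂ) * conj ω).re| * |((U : ℂ) * ω).im| := by
        rw [him, ← abs_mul, ← abs_mul]
        exact abs_add_le _ _
    _ ≤ |((α : ℂ) * conj ω).im| * ‖(U * ω : ℂ)‖ +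
          ‖(α * conj ω : ℂ)‖ * |((U : ℂ) * ω).im| := by
        gcongr <;> exact Complex.abs_re_le_norm _
    _ = _ := by simp [hω]

theorem one_le_abs_im_mul_pow_add_norm_mul_pow {t : ℤ} {A : ℝ} {α : GaussianInt} (ht : 4 ≤ t)
    (hA : 0 ≤ A) (hroot : 16 * t * A + 64 ≤ A ^ 2) (hα : α ≠ 0) (n : ℕ) :
    1 ≤ |((α : ℂ) * conj (quarterRoot t)).im| * A ^ (n + 1) +
      ‖(α : ℂ)‖ * ((4 / t) ^ n * (1 / (4 * t))) := by
  have ht' : (4 : ℝ) ≤ t := by exact_mod_cast ht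
  have hA1 : 1 ≤ A := by nlinarith
  obtain ⟨m, hnm, hmn, him⟩ := exists_im_mul_quarterApprox_ne_zero t hα n
  calc (1 : ℝ) ≤ |((α : ℂ) * conj (quarterRoot t)).im| * ‖(quarterApprox t m : ℂ)‖ +
          ‖(α : ℂ)‖ * |((quarterApprox t m : ℂ) * quarterRoot t).im| :=
        one_le_abs_im_mul_norm_add_norm_mul_abs_im (norm_quarterRoot t) him
    _ ≤ |((α : ℂ) * conj (quarterRoot t)).im| * A ^ m +
          ‖(α : ℂ)‖ * ((4 / t) ^ m * (1 / (4 * t))) := by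
        gcongr
        · exact norm_quarterApprox_le t hA (by rwa [abs_of_pos (by linarith)]) m
        · exact abs_im_quarterApprox_mul_quarterRoot_le (by lia) m
    _ ≤ _ := by
        have : 4 / (t : ℝ) ≤ 1 := (div_le_one (by linarith)).2 ht'
        gcongr ?_ * ?_ + ?_ * (?_ * ?_)
        · exact pow_le_pow_right₀ hA1 hmn
        · exact pow_le_pow_of_le_one (by positivity) this hnm

theorem norm_lt_of_abs_im_mul_conj_quarterRoot_le {α : GaussianInt}
    (h : |((α : ℂ) * conj (quarterRoot 239)).im| * ‖(α : ℂ)‖ ^ 3 ≤ 240) :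
    ‖(α : ℂ)‖ < 478 * (239 / 4) ^ 2 := by
  by_contra! hlarge
  set q := |((α : ℂ) * conj (quarterRoot 239)).im|
  set ρ := ‖(α : ℂ)‖
  have hα : α ≠ 0 := by
    rintro rfl
    norm_num [ρ] at hlarge
  obtain ⟨k, hk, hk'⟩ := exists_nat_pow_near (x := ρ / (478 * (239 / 4) ^ 2)) (y := 239 / 4)
    ((one_le_div (by norm_num)).2 hlarge) (by norm_num)
  rw [le_div_iff₀ (by norm_num)] at hk
  rw [div_lt_iff₀ (by norm_num)] at hk'
  have hfirst : q * 3825 ^ (k + 3 + 1) ≤ 1 / 2 := by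
    have hgrow : (480 : ℝ) * 3825 ^ (k + 3 + 1) ≤ ρ ^ 3 :=
      calc (480 : ℝ) * 3825 ^ (k + 3 + 1) = 480 * 3825 ^ 4 * 3825 ^ k := by ring
        _ ≤ (478 * (239 / 4) ^ 2) ^ 3 * ((239 / 4) ^ 3) ^ k := by gcongr <;> norm_num
        _ = ((239 / 4) ^ k * (478 * (239 / 4) ^ 2)) ^ 3 := by
          rw [mul_comm, mul_pow (_ ^ k), pow_right_comm _ k]
        _ ≤ ρ ^ 3 := by gcongr
    have := mul_le_mul_of_nonneg_left hgrow (abs_nonneg _ : 0 ≤ q)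
    linarith
  have hsecond : ρ * ((4 / 239) ^ (k + 3) * (1 / (4 * 239))) < 1 / 2 :=
    calc ρ * ((4 / 239) ^ (k + 3) * (1 / (4 * 239)))
        < (239 / 4) ^ (k + 1) * (478 * (239 / 4) ^ 2) *
            ((4 / 239) ^ (k + 3) * (1 / (4 * 239))) := by gcongr
      _ = (239 / 4 * (4 / 239)) ^ (k + 3) / 2 := by
          rw [mul_pow]
          ring
      _ = 1 / 2 := by norm_num
  have hsum := one_le_abs_im_mul_pow_add_norm_mul_pow (t := 239) (A := 3825) (by norm_num)
    (by norm_num) (by norm_num) hα (k + 3)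
  push_cast at hsum
  linarith

theorem abs_im_mul_norm_pow_three_le {ζ : ℂ} (hre : 0 < (ζ ^ 4).re) (h : |ζ.im| ≤ |ζ.re|) :
    |ζ.im| * ‖ζ‖ ^ 3 ≤ |(ζ ^ 4).im| / 2 := by
  obtain ⟨p, q⟩ := ζ
  have hre' : 0 < p ^ 4 - 6 * p ^ 2 * q ^ 2 + q ^ 4 := by
    convert hre using 1
    simp only [pow_succ, pow_zero, one_mul, Complex.mul_re, Complex.mul_im]
    ring
  have him : ((⟨p, q⟩ : ℂ) ^ 4).im = 4 * p * q * (p ^ 2 - q ^ 2) := by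
    simp only [pow_succ, pow_zero, one_mul, Complex.mul_re, Complex.mul_im]
    ring
  have hnorm : ‖(⟨p, q⟩ : ℂ)‖ ^ 2 = p ^ 2 + q ^ 2 := by
    rw [← Complex.normSq_eq_norm_sq, Complex.normSq_mk]
    ring
  have hqp : q ^ 2 ≤ p ^ 2 := sq_le_sq.2 h
  refine abs_le_of_sq_le_sq' ?_ (by positivity) |>.2
  calc (|q| * ‖(⟨p, q⟩ : ℂ)‖ ^ 3) ^ 2
      = q ^ 2 * (p ^ 2 + q ^ 2) * (p ^ 2 + q ^ 2) ^ 2 := by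
        rw [mul_pow, sq_abs, ← hnorm]
        ring
    _ ≤ q ^ 2 * (2 * p ^ 2) * (2 * (p ^ 2 - q ^ 2) ^ 2) := by
        gcongr
        · linarith
        · linarith
    _ = (|((⟨p, q⟩ : ℂ) ^ 4).im| / 2) ^ 2 := by
        rw [div_pow, sq_abs, him]
        ring

theorem mul_conj_quarterRoot_pow_four (α : GaussianInt) {t : ℤ} (ht : 0 < t) :
    ((α : ℂ) * conj (quarterRoot t)) ^ 4 =
      Real.sin (Real.arctan (t : ℝ)⁻¹) * ((α ^ 4 * ⟨t, -1⟩ : GaussianInt) : ℂ) := by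
  rw [mul_pow, ← map_pow, ← map_pow, quarterRoot_pow_four (by exact_mod_cast ht),
    map_mul GaussianInt.toComplex, GaussianInt.toComplex_def' t]
  simp only [map_mul, map_add, Complex.conj_ofReal, Complex.conj_I]
  push_cast
  ring

theorem abs_im_mul_conj_quarterRoot_mul_norm_pow_three_le {α : GaussianInt} {t : ℤ} (ht : 0 < t)
    (hre : 0 < (α ^ 4 * ⟨t, -1⟩ : GaussianInt).re)
    (h : |((α : ℂ) * conj (quarterRoot t)).im| ≤ |((α : ℂ) * conj (quarterRoot t)).re|) :
    |((α : ℂ) * conj (quarterRoot t)).im| * ‖(α : ℂ)‖ ^ 3 ≤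
      |((α ^ 4 * ⟨t, -1⟩ : GaussianInt).im : ℝ)| / (2 * t) := by
  have ht' : 0 < (t : ℝ)⁻¹ := inv_pos.2 (by exact_mod_cast ht)
  set ζ : ℂ := α * conj (quarterRoot t)
  set S := Real.sin (Real.arctan (t : ℝ)⁻¹)
  have hS0 : 0 < S := Real.sin_arctan_pos.2 ht'
  have hS1 : S ≤ (t : ℝ)⁻¹ :=
    (Real.sin_le (Real.arctan_nonneg.2 ht'.le)).trans (arctan_le_self ht'.le)
  have hζ4 : ζ ^ 4 = S * ((α ^ 4 * ⟨t, -1⟩ : GaussianInt) : ℂ) :=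
    mul_conj_quarterRoot_pow_four α ht
  calc |ζ.im| * ‖(α : ℂ)‖ ^ 3 = |ζ.im| * ‖ζ‖ ^ 3 := by simp [ζ, norm_quarterRoot]
    _ ≤ |(ζ ^ 4).im| / 2 := by
        refine abs_im_mul_norm_pow_three_le ?_ h
        rw [hζ4, Complex.re_ofReal_mul, ← GaussianInt.intCast_re]
        exact mul_pos hS0 (by exact_mod_cast hre)
    _ = S * |((α ^ 4 * ⟨t, -1⟩ : GaussianInt).im : ℝ)| / 2 := by
        rw [hζ4, Complex.im_ofReal_mul, ← GaussianInt.intCast_im, abs_mul, abs_of_pos hS0]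
    _ ≤ (t : ℝ)⁻¹ * |((α ^ 4 * ⟨t, -1⟩ : GaussianInt).im : ℝ)| / 2 := by gcongr
    _ = _ := by ring

theorem norm_lt_of_abs_im_pow_four_mul_le {α : GaussianInt}
    (hre : 0 < (α ^ 4 * ⟨239, -1⟩ : GaussianInt).re)
    (him : |(α ^ 4 * ⟨239, -1⟩ : GaussianInt).im| ≤ 114244) : α.norm < 3 * 10 ^ 12 := by
  wlog hζ : |((α : ℂ) * conj (quarterRoot 239)).im| ≤ |((α : ℂ) * conj (quarterRoot 239)).re|
    generalizing α
  · have hI : ((⟨0, 1⟩ * α : GaussianInt) : ℂ) = Complex.I * α := by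
      simp [GaussianInt.toComplex_def']
    have hpow : (⟨0, 1⟩ * α : GaussianInt) ^ 4 = α ^ 4 := by
      rw [mul_pow, show (⟨0, 1⟩ : GaussianInt) ^ 4 = 1 from rfl, one_mul]
    have := this (α := ⟨0, 1⟩ * α) (by rwa [hpow]) (by rwa [hpow]) (by
      rw [hI, mul_assoc, Complex.I_mul_im, Complex.I_mul_re, abs_neg]
      exact le_of_not_ge hζ)
    rwa [Zsqrtd.norm_mul, show Zsqrtd.norm (⟨0, 1⟩ : GaussianInt) = 1 from rfl, one_mul] at this
  have hsmall : |((α : ℂ) * conj (quarterRoot 239)).im| * ‖(α : ℂ)‖ ^ 3 ≤ 240 :=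
    calc _ ≤ |((α ^ 4 * ⟨239, -1⟩ : GaussianInt).im : ℝ)| / (2 * 239) := by
          exact_mod_cast abs_im_mul_conj_quarterRoot_mul_norm_pow_three_le (t := 239)
            (by norm_num) hre (by exact_mod_cast hζ)
      _ ≤ 114244 / (2 * 239) := by
          gcongr
          exact_mod_cast him
      _ ≤ 240 := by norm_num
  have hnorm : (α.norm : ℝ) < (478 * (239 / 4) ^ 2) ^ 2 := by
    rw [GaussianInt.intCast_real_norm, Complex.normSq_eq_norm_sq]
    gcongr
    exact norm_lt_of_abs_im_mul_conj_quarterRoot_le hsmall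
  have : (α.norm : ℝ) < 3 * 10 ^ 12 := hnorm.trans (by norm_num)
  exact_mod_cast this

/-! ### Factorization in the Gaussian integers -/

theorem gaussianInt_norm_pow (α : GaussianInt) (n : ℕ) : (α ^ n).norm = α.norm ^ n :=
  map_pow Zsqrtd.normMonoidHom α n

theorem gaussianInt_pow_four_emod_four {δ : GaussianInt} (hδ : Odd δ.norm) :
    (δ ^ 4).re % 4 = 1 ∧ (δ ^ 4).im % 4 = 0 := by
  obtain ⟨a, b⟩ := δ
  have hodd : Odd (a ^ 2 - b ^ 2) := by
    have hsub : a ^ 2 - b ^ 2 = Zsqrtd.norm (⟨a, b⟩ : GaussianInt) - 2 * b ^ 2 := by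
      rw [Zsqrtd.norm_def]
      ring
    exact hsub ▸ hδ.sub_even (even_two_mul _)
  have hre : ((⟨a, b⟩ : GaussianInt) ^ 4).re = (a ^ 2 - b ^ 2) ^ 2 - 4 * (a * b) ^ 2 := by
    simp only [pow_succ, pow_zero, one_mul, Zsqrtd.re_mul, Zsqrtd.im_mul]
    ring
  have him : ((⟨a, b⟩ : GaussianInt) ^ 4).im = 4 * (a * b * (a ^ 2 - b ^ 2)) := by
    simp only [pow_succ, pow_zero, one_mul, Zsqrtd.re_mul, Zsqrtd.im_mul]
    ring
  have hsq := Int.sq_mod_four_eq_one_of_odd hodd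
  lia

theorem gaussianInt_mul_emod_four {α : GaussianInt} (hre : α.re % 4 = 1) (him : α.im % 4 = 0)
    (β : GaussianInt) : (α * β).re % 4 = β.re % 4 ∧ (α * β).im % 4 = β.im % 4 := by
  obtain ⟨k, hk⟩ : ∃ k, α.re = 4 * k + 1 := ⟨α.re / 4, by lia⟩
  obtain ⟨l, hl⟩ : ∃ l, α.im = 4 * l := ⟨α.im / 4, by lia⟩
  rw [Zsqrtd.re_mul, Zsqrtd.im_mul, hk, hl]
  exact ⟨Int.modEq_iff_dvd.2 ⟨l * β.im - k * β.re, by ring⟩,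
    Int.modEq_iff_dvd.2 ⟨-(k * β.im + l * β.re), by ring⟩⟩

theorem isCoprime_gaussianInt_consecutive (q : ℤ) :
    IsCoprime (⟨q + 1, -q⟩ : GaussianInt) ⟨q + 1, q⟩ := by
  refine ⟨⟨-(q ^ 2 + q), q ^ 2 + q⟩, ⟨q + 1 - (q ^ 2 + q), -q - (q ^ 2 + q)⟩, Zsqrtd.ext ?_ ?_⟩
  · simp only [Zsqrtd.re_add, Zsqrtd.re_mul, Zsqrtd.re_one]
    ring
  · simp only [Zsqrtd.im_add, Zsqrtd.im_mul, Zsqrtd.im_one]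
    ring

theorem gaussianInt_eq_one_of_emod_four {u : GaussianInt} {q : ℤ} (hu : IsUnit u) (hq : Even q)
    (hre : u.re % 4 = (q + 1) % 4) (him : u.im % 4 = -q % 4) : u = 1 := by
  have hnorm := (Zsqrtd.norm_eq_one_iff' (by norm_num) u).2 hu
  rw [Zsqrtd.norm_def] at hnorm
  obtain ⟨k, rfl⟩ := hq
  have him0 : u.im = 0 := by
    have : u.im < 2 := by nlinarith
    have : -2 < u.im := by nlinarith
    lia
  have hre1 : u.re = 1 ∨ u.re = -1 := by
    rw [← sq_eq_one_iff]
    rw [him0] at hnorm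
    linarith
  apply Zsqrtd.ext
  · change u.re = 1
    lia
  · exact him0

theorem exists_one_add_I_mul_pow_four {z x : ℤ} (hz : z % 4 = 1) (h : z ^ 2 + 1 = 2 * x ^ 4) :
    ∃ δ : GaussianInt, (⟨1, 1⟩ : GaussianInt) * δ ^ 4 = ⟨z, 1⟩ := by
  obtain ⟨q, rfl⟩ : ∃ q, z = 2 * q + 1 := ⟨z / 2, by lia⟩
  have hq : Even q := Int.even_iff.2 (by lia)
  have hx : x ^ 4 = q ^ 2 + (q + 1) ^ 2 := by linarith
  have hfactor : (⟨q + 1, -q⟩ : GaussianInt) * ⟨q + 1, q⟩ = (x : GaussianInt) ^ 4 := by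
    rw [← Int.cast_pow, hx]
    apply Zsqrtd.ext
    · rw [Zsqrtd.re_intCast, Zsqrtd.re_mul]
      ring
    · rw [Zsqrtd.im_intCast, Zsqrtd.im_mul]
      ring
  obtain ⟨δ, u, hδ⟩ :=
    exists_associated_pow_of_mul_eq_pow' (isCoprime_gaussianInt_consecutive q) hfactor
  have hodd : Odd δ.norm := by
    have hnorm : δ.norm ^ 4 = 2 * (q ^ 2 + q) + 1 := by
      rw [← gaussianInt_norm_pow, Zsqrtd.norm_eq_of_associated (by norm_num) ⟨u, hδ⟩,
        Zsqrtd.norm_def]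
      ring
    exact (Int.odd_pow' four_ne_zero).1 (hnorm ▸ odd_two_mul_add_one _)
  obtain ⟨hre, him⟩ := gaussianInt_pow_four_emod_four hodd
  have hu : (u : GaussianInt) = 1 := by
    obtain ⟨hure, huim⟩ := gaussianInt_mul_emod_four hre him u
    rw [hδ] at hure huim
    exact gaussianInt_eq_one_of_emod_four u.isUnit hq hure.symm huim.symm
  refine ⟨δ, ?_⟩
  rw [hu, mul_one] at hδ
  rw [hδ]
  apply Zsqrtd.ext
  · rw [Zsqrtd.re_mul]
    ring
  · rw [Zsqrtd.im_mul]
    ring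

theorem norm_eq_of_one_add_I_mul_pow_four_eq {δ : GaussianInt} {z x : ℤ} (hx : 0 ≤ x)
    (h : z ^ 2 + 1 = 2 * x ^ 4) (hδ : (⟨1, 1⟩ : GaussianInt) * δ ^ 4 = ⟨z, 1⟩) : δ.norm = x := by
  have hnorm := congrArg Zsqrtd.norm hδ
  rw [Zsqrtd.norm_mul, gaussianInt_norm_pow, Zsqrtd.norm_def ⟨1, 1⟩,
    Zsqrtd.norm_def ⟨z, 1⟩] at hnorm
  exact (pow_left_inj₀ (GaussianInt.norm_nonneg δ) hx four_ne_zero).1 (by linarith)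

theorem norm_mul_norm_lt_of_pow_four_mul_eq {γ δ : GaussianInt} {c z : ℤ}
    (hγ : γ ^ 4 * ⟨239, -1⟩ = (c : GaussianInt) * ⟨1, 1⟩)
    (hδ : (⟨1, 1⟩ : GaussianInt) * δ ^ 4 = ⟨z, 1⟩) (hcz : 0 < c * z) (hc : |c| ≤ 114244) :
    γ.norm * δ.norm < 3 * 10 ^ 12 := by
  have hprod : (γ * δ) ^ 4 * ⟨239, -1⟩ = (c : GaussianInt) * ⟨z, 1⟩ := by
    rw [← hδ]
    linear_combination δ ^ 4 * hγ
  rw [← Zsqrtd.norm_mul]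
  refine norm_lt_of_abs_im_pow_four_mul_le ?_ ?_ <;> rw [hprod]
  · simpa using hcz
  · simpa using hc

theorem lt_of_sq_add_one_eq_two_mul_pow_four {z x : ℤ} (hx : 0 ≤ x) (h : z ^ 2 + 1 = 2 * x ^ 4) :
    x < 3 * 10 ^ 11 := by
  wlog hz : z % 4 = 1 generalizing z
  · have hodd : z % 2 = 1 := by
      rw [← Int.odd_iff, ← Int.odd_pow' two_ne_zero]
      exact ⟨x ^ 4 - 1, by linarith⟩
    exact this (by rwa [neg_sq]) (show -z % 4 = 1 by lia)
  obtain ⟨δ, hδ⟩ := exists_one_add_I_mul_pow_four hz h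
  have hnorm := norm_eq_of_one_add_I_mul_pow_four_eq hx h hδ
  rcases lt_or_gt_of_ne (show z ≠ 0 by lia) with hneg | hpos
  · have := norm_mul_norm_lt_of_pow_four_mul_eq (γ := ⟨3, -2⟩) (c := -28561) rfl hδ
      (by linarith) (by norm_num)
    rw [Zsqrtd.norm_def, hnorm] at this
    linarith
  · have := norm_mul_norm_lt_of_pow_four_mul_eq (γ := ⟨5, 1⟩) (c := 114244) rfl hδ
      (by linarith) (by norm_num)
    rw [Zsqrtd.norm_def, hnorm] at this
    linarith

/-! ### The negative Pell equation -/

/-- The positive solutions of the negative Pell equation `z ^ 2 + 1 = 2 * X ^ 2`, in increasing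
order, as pairs `(z, X)`. -/
def negPell : ℕ → ℕ × ℕ
  | 0 => (1, 1)
  | n + 1 => (3 * (negPell n).1 + 4 * (negPell n).2, 2 * (negPell n).1 + 3 * (negPell n).2)

theorem exists_negPell_eq {z X : ℕ} (h : z ^ 2 + 1 = 2 * X ^ 2) : ∃ j, negPell j = (z, X) := by
  induction X using Nat.strong_induction_on generalizing z with
  | _ X ih =>
    rcases lt_or_ge X 3 with hX | hX
    · have hz : z < 3 := by nlinarith
      obtain ⟨rfl, rfl⟩ : z = 1 ∧ X = 1 := by interval_cases X <;> interval_cases z <;> lia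
      exact ⟨0, rfl⟩
    · obtain ⟨z', hz'⟩ : ∃ z', 3 * z = 4 * X + z' := Nat.exists_eq_add_of_le (by nlinarith)
      obtain ⟨X', hX'⟩ : ∃ X', 3 * X = 2 * z + X' := Nat.exists_eq_add_of_le (by nlinarith)
      have hlt : X' < X := by nlinarith
      have hdescent : z' ^ 2 + 1 = 2 * X' ^ 2 := by
        zify at h hz' hX' ⊢
        rw [show (z' : ℤ) = 3 * z - 4 * X by linarith, show (X' : ℤ) = 3 * X - 2 * z by linarith]
        linear_combination h
      obtain ⟨j, hj⟩ := ih X' hlt hdescent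
      exact ⟨j + 1, by rw [negPell, hj]; ext <;> dsimp only <;> lia⟩

theorem five_pow_le_negPell (j : ℕ) : 5 ^ j ≤ (negPell j).1 ∧ 5 ^ j ≤ (negPell j).2 := by
  induction j with
  | zero => simp [negPell]
  | succ j ih =>
    simp only [negPell, pow_succ]
    lia

theorem eq_zero_or_three_of_isSquare_negPell :
    ∀ j < 33, IsSquare (negPell j).2 → j = 0 ∨ j = 3 := by
  decide +kernel

theorem eq_one_or_thirteen_of_sq_add_one_eq {z x : ℤ} (hx : 0 ≤ x) (h : z ^ 2 + 1 = 2 * x ^ 4) :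
    x = 1 ∨ x = 13 := by
  have hlt := lt_of_sq_add_one_eq_two_mul_pow_four hx h
  lift x to ℕ using hx
  obtain ⟨j, hj⟩ : ∃ j, negPell j = (z.natAbs, x ^ 2) := exists_negPell_eq (by
    zify
    rw [sq_abs]
    linarith)
  have hX : (negPell j).2 = x ^ 2 := by rw [hj]
  have hj33 : j < 33 := by
    have h5 := (five_pow_le_negPell j).2
    refine (Nat.pow_lt_pow_iff_right (a := 5) (by norm_num)).1 ?_
    calc 5 ^ j ≤ x ^ 2 := hX ▸ h5
      _ < (3 * 10 ^ 11) ^ 2 := by gcongr; exact_mod_cast hlt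
      _ < 5 ^ 33 := by norm_num
  rcases eq_zero_or_three_of_isSquare_negPell j hj33 ⟨x, hX.trans (sq x)⟩ with rfl | rfl
  · left
    have : x ^ 2 = 1 ^ 2 := hX.symm
    exact_mod_cast Nat.pow_left_injective two_ne_zero this
  · right
    have : x ^ 2 = 13 ^ 2 := hX.symm
    exact_mod_cast Nat.pow_left_injective two_ne_zero this

/-- The only pairs of positive integers `(x, y)` with `y² = 8x⁴ - 4` are
`(1, 2)` and `(13, 478)`. -/
theorem stmt_13 :
    {p : ℤ × ℤ | 1 ≤ p.1 ∧ 1 ≤ p.2 ∧ p.2 ^ 2 = 8 * p.1 ^ 4 - 4} =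
      {(1, 2), (13, 478)} := by
  ext ⟨x, y⟩
  simp only [Set.mem_ofPred_eq, Set.mem_insert_iff, Set.mem_singleton_iff, Prod.mk.injEq]
  constructor
  · rintro ⟨hx, hy, h⟩
    obtain ⟨z, rfl⟩ : 2 ∣ y :=
      Int.prime_two.dvd_of_dvd_pow (n := 2) ⟨4 * x ^ 4 - 2, by linarith⟩
    have hz : z ^ 2 + 1 = 2 * x ^ 4 := by linarith
    rcases eq_one_or_thirteen_of_sq_add_one_eq (by lia) hz with rfl | rfl
    · left
      constructor <;> nlinarith
    · right
      constructor <;> nlinarith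
  · rintro (⟨rfl, rfl⟩ | ⟨rfl, rfl⟩) <;> norm_num
end

section
/- Let t ≥ 1 be an integer such that D = t² + 4 is squarefree. Then ε = (t + √D)/2 is an algebraic integer in the real quadratic field ℚ(√D), it is a unit of the ring of integers of ℚ(√D) with field norm Norm_{ℚ(√D)/ℚ}(ε) = -1, and it is the fundamental unit: every unit u of the ring of integers of ℚ(√D) whose image under the real embedding sending √D to the positive square root is greater than 1 satisfies u ≥ ε. -/
/-!
Write `s = √D` with `D` squarefree. Trace and norm show that an algebraic integer of `ℚ(s)` has the
form `(m + n s) / 2` with `m, n` integers, and that for a unit `m² - D n² = ±4`. If the unit exceeds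
`1`, its conjugate has absolute value below `1`, so `m` and `n` are both positive. For `D = t² + 4`
this gives `m² ≥ (t² + 4) n² - 4 ≥ t²`, hence `m ≥ t` and `n ≥ 1`, so the unit is at least
`(t + s) / 2`.
-/

open QuadraticAlgebra

section Integrality

variable {A R : Type*} [CommRing A] [CommRing R] [Algebra A R]

theorem isIntegral_of_mul_self_eq {B : Type*} [Ring B] [Algebra R B] {a b : R} {x : B}
    (hx : x * x = a • 1 + b • x) : IsIntegral R x := by
  have omega_integral : IsIntegral R (ω : QuadraticAlgebra R a b) :=
    Algebra.IsIntegral.isIntegral ω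
  simpa using omega_integral.map (lift ⟨x, hx⟩)

variable {a b : R} {z : QuadraticAlgebra R a b}

theorem isIntegral_quadraticAlgebra_star (hz : IsIntegral A z) : IsIntegral A (star z) :=
  hz.map_of_comp_eq (RingHom.id A) (starRingEnd (QuadraticAlgebra R a b)) <| by
    ext r <;> simp [starRingEnd_apply, IsScalarTower.algebraMap_apply A R (QuadraticAlgebra R a b)]

theorem isIntegral_quadraticAlgebra_norm (hz : IsIntegral A z) : IsIntegral A z.norm := by
  rw [← isIntegral_algebraMap_iff (B := QuadraticAlgebra R a b) algebraMap_injective,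
    algebraMap_norm_eq_mul_star]
  exact hz.mul (isIntegral_quadraticAlgebra_star hz)

theorem isIntegral_quadraticAlgebra_trace (hz : IsIntegral A z) : IsIntegral A z.trace := by
  rw [← isIntegral_algebraMap_iff (B := QuadraticAlgebra R a b) algebraMap_injective,
    algebraMap_trace_eq_add_star]
  exact hz.add (isIntegral_quadraticAlgebra_star hz)

end Integrality

section IntegrallyClosed

variable {R K : Type*} [CommRing R] [IsDomain R] [IsIntegrallyClosed R] [DecompositionMonoid R]
  [Field K] [Algebra R K] [IsFractionRing R K] {d : R}

-- `d x` is integral because its square is, and `d ∣ (d x)²` forces `d ∣ d x`.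
theorem isIntegral_of_isIntegral_squarefree_mul_sq (hd : Squarefree d) {x : K}
    (hx : IsIntegral R (algebraMap R K d * x ^ 2)) : IsIntegral R x := by
  have hdx : IsIntegral R (algebraMap R K d * x) := by
    refine IsIntegral.of_pow two_pos ?_
    rw [mul_pow, sq (algebraMap R K d), mul_assoc]
    exact isIntegral_algebraMap.mul hx
  obtain ⟨k, hk⟩ := IsIntegrallyClosed.isIntegral_iff.1 hdx
  obtain ⟨c, hc⟩ := IsIntegrallyClosed.isIntegral_iff.1 hx
  have d_dvd_sq : d ∣ k ^ 2 := by
    refine ⟨c, IsFractionRing.injective R K ?_⟩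
    rw [map_pow, map_mul, hk, hc]
    ring
  obtain ⟨y, rfl⟩ := (hd.dvd_pow_iff_dvd two_ne_zero).1 d_dvd_sq
  have hd0 : algebraMap R K d ≠ 0 := by simpa using hd.ne_zero
  rw [map_mul] at hk
  rw [← mul_left_cancel₀ hd0 hk]
  exact isIntegral_algebraMap

theorem isIntegral_quadraticAlgebra_two_mul_im (hd : Squarefree d)
    {z : QuadraticAlgebra K (algebraMap R K d) 0} (hz : IsIntegral R z) :
    IsIntegral R (2 * z.im) := by
  refine isIntegral_of_isIntegral_squarefree_mul_sq hd ?_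
  have trace_sq_sub_norm :
      algebraMap R K d * (2 * z.im) ^ 2 = z.trace ^ 2 - (4 : ℕ) • z.norm := by
    rw [trace_def, norm_def]
    simp only [nsmul_eq_mul]
    push_cast
    ring
  rw [trace_sq_sub_norm]
  exact ((isIntegral_quadraticAlgebra_trace hz).pow 2).sub
    ((isIntegral_quadraticAlgebra_norm hz).nsmul 4)

end IntegrallyClosed

theorem range_lift_eq_adjoin {R B : Type*} [CommSemiring R] [Ring B] [Algebra R B] {a b : R}
    (s : {s : B // s * s = a • 1 + b • s}) :
    (lift s).range = Algebra.adjoin R {(s : B)} := by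
  have adjoin_omega : Algebra.adjoin R {(ω : QuadraticAlgebra R a b)} = ⊤ := by
    refine eq_top_iff.2 fun ⟨x, y⟩ _ ↦ ?_
    rw [mk_eq_add_smul_omega]
    exact add_mem (algebraMap_mem _ x)
      (Subalgebra.smul_mem _ (Algebra.self_mem_adjoin_singleton R ω) y)
  rw [← Algebra.map_top, ← adjoin_omega, AlgHom.map_adjoin_singleton]
  simp

section IntegralUnits

variable {D : ℤ}

theorem rat_sq_ne_intCast_of_squarefree (hD : Squarefree D) (hD1 : D ≠ 1) (r : ℚ) : r ^ 2 ≠ D := by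
  intro hr
  obtain ⟨k, hk⟩ : IsSquare D := Rat.isSquare_intCast_iff.1 ⟨r, by rw [← hr, sq]⟩
  exact hD1 (hk.trans (Int.isUnit_mul_self (hD k (Dvd.intro 1 (by rw [hk, mul_one])))))

theorem exists_int_of_isIntegral_of_mul_eq_one (hD : Squarefree D)
    {x y : QuadraticAlgebra ℚ (algebraMap ℤ ℚ D) 0}
    (hx : IsIntegral ℤ x) (hy : IsIntegral ℤ y) (hxy : x * y = 1) :
    ∃ m n : ℤ, x.re = m / 2 ∧ x.im = n / 2 ∧ |m ^ 2 - D * n ^ 2| = 4 := by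
  obtain ⟨m, hm⟩ := IsIntegrallyClosed.isIntegral_iff.1 (isIntegral_quadraticAlgebra_trace hx)
  obtain ⟨n, hn⟩ := IsIntegrallyClosed.isIntegral_iff.1
    (isIntegral_quadraticAlgebra_two_mul_im hD hx)
  obtain ⟨N, hN⟩ := IsIntegrallyClosed.isIntegral_iff.1 (isIntegral_quadraticAlgebra_norm hx)
  obtain ⟨M, hM⟩ := IsIntegrallyClosed.isIntegral_iff.1 (isIntegral_quadraticAlgebra_norm hy)
  simp only [eq_intCast] at hm hn hN hM
  have norm_mul_norm : N * M = 1 := by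
    have : (N : ℚ) * M = 1 := by rw [hN, hM, ← map_mul, hxy, map_one]
    exact_mod_cast this
  have abs_norm : |N| = 1 := Int.isUnit_iff_abs_eq.1 (.of_mul_eq_one M norm_mul_norm)
  have hre : x.re = m / 2 := by rw [hm, trace_def]; ring
  have him : x.im = n / 2 := by rw [hn]; ring
  have four_mul_norm : m ^ 2 - D * n ^ 2 = 4 * N := by
    have : (m : ℚ) ^ 2 - D * n ^ 2 = 4 * N := by
      rw [hN, norm_def, hre, him, eq_intCast]
      ring
    exact_mod_cast this
  exact ⟨m, n, hre, him, by rw [four_mul_norm, abs_mul, abs_norm]; rfl⟩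

theorem exists_int_of_unit_mem_adjoin {F : Type*} [Field F] [CharZero F] (hD : Squarefree D)
    (hD1 : D ≠ 1) {s : F} (hs : s * s = D) {u w : F}
    (hu : u ∈ Algebra.adjoin ℚ {s}) (hui : IsIntegral ℤ u)
    (hw : w ∈ Algebra.adjoin ℚ {s}) (hwi : IsIntegral ℤ w) (huw : u * w = 1) :
    ∃ m n : ℤ, u = (m + n * s) / 2 ∧ |m ^ 2 - D * n ^ 2| = 4 := by
  let d : ℚ := algebraMap ℤ ℚ D
  have : Fact (∀ r : ℚ, r ^ 2 ≠ d + 0 * r) :=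
    ⟨fun r ↦ by simpa [d] using rat_sq_ne_intCast_of_squarefree hD hD1 r⟩
  have hs' : s * s = d • 1 + (0 : ℚ) • s := by simp [d, hs, Rat.smul_def]
  let φ : QuadraticAlgebra ℚ d 0 →ₐ[ℚ] F := lift ⟨s, hs'⟩
  have φ_injective : Function.Injective φ := φ.injective
  have isIntegral_of_map {z} (hz : IsIntegral ℤ (φ z)) : IsIntegral ℤ z :=
    (isIntegral_algHom_iff (φ.restrictScalars ℤ) φ_injective).1 hz
  have mem_range {v} (hv : v ∈ Algebra.adjoin ℚ {s}) : ∃ z, φ z = v := by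
    rwa [← range_lift_eq_adjoin ⟨s, hs'⟩] at hv
  obtain ⟨x, rfl⟩ := mem_range hu
  obtain ⟨y, rfl⟩ := mem_range hw
  have hxy : x * y = 1 := φ_injective (by rw [map_mul, huw, map_one])
  obtain ⟨m, n, hre, him, hmn⟩ := exists_int_of_isIntegral_of_mul_eq_one hD
    (isIntegral_of_map hui) (isIntegral_of_map hwi) hxy
  refine ⟨m, n, ?_, hmn⟩
  have φ_apply : φ x = x.re • 1 + x.im • s := rfl
  rw [φ_apply, hre, him, Rat.smul_def, Rat.smul_def]
  push_cast
  ring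

end IntegralUnits

theorem pos_and_pos_of_one_lt_add_of_abs_sq_sub_sq_le_one {F : Type*} [CommRing F] [LinearOrder F]
    [IsStrictOrderedRing F] {x y : F} (hxy : 1 < x + y) (h : |x ^ 2 - y ^ 2| ≤ 1) :
    0 < x ∧ 0 < y := by
  have conj_lt_one : |x - y| < 1 := by
    rw [sq_sub_sq, abs_mul, abs_of_pos (one_pos.trans hxy)] at h
    by_contra! hge
    nlinarith
  obtain ⟨hlt, hgt⟩ := abs_lt.1 conj_lt_one
  constructor <;> linarith

theorem sq_le_sq_of_abs_sq_sub_sq_add_mul_sq_le {t c m n : ℤ} (hn : n ≠ 0)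
    (h : |m ^ 2 - (t ^ 2 + c) * n ^ 2| ≤ c) : t ^ 2 ≤ m ^ 2 := by
  have hc : 0 ≤ c := (abs_nonneg _).trans h
  have one_le_sq : 1 ≤ n ^ 2 := (one_le_sq_iff_one_le_abs n).2 (Int.one_le_abs hn)
  calc t ^ 2 = (t ^ 2 + c) * 1 - c := by ring
    _ ≤ (t ^ 2 + c) * n ^ 2 - c := by gcongr
    _ ≤ m ^ 2 := by linarith [neg_le_of_abs_le h]

theorem half_add_sqrt_le_of_unit_mem_adjoin {t : ℤ} (hsf : Squarefree (t ^ 2 + 4)) {s : ℝ}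
    (hs : s * s = (t ^ 2 + 4 : ℤ)) (hs0 : 0 < s) {u w : ℝ}
    (hu : u ∈ Algebra.adjoin ℚ {s}) (hui : IsIntegral ℤ u)
    (hw : w ∈ Algebra.adjoin ℚ {s}) (hwi : IsIntegral ℤ w) (huw : u * w = 1) (hu1 : 1 < u) :
    (t + s) / 2 ≤ u := by
  obtain ⟨m, n, rfl, hmn⟩ :=
    exists_int_of_unit_mem_adjoin hsf (by nlinarith) hs hu hui hw hwi huw
  have norm_real : |(m / 2 : ℝ) ^ 2 - (n * s / 2) ^ 2| = 1 := by
    have hmnR : |(m : ℝ) ^ 2 - (t ^ 2 + 4 : ℤ) * n ^ 2| = 4 := by exact_mod_cast hmn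
    rw [← hs] at hmnR
    calc |(m / 2 : ℝ) ^ 2 - (n * s / 2) ^ 2| = |((m : ℝ) ^ 2 - s * s * n ^ 2) / 4| := by ring_nf
      _ = 1 := by rw [abs_div, hmnR]; norm_num
  obtain ⟨hm, hns⟩ := pos_and_pos_of_one_lt_add_of_abs_sq_sub_sq_le_one
    (by rwa [← add_div]) norm_real.le
  have m_pos : 0 < m := by simpa using hm
  have n_pos : 0 < n := by
    have : (0 : ℝ) < n := (pos_iff_pos_of_mul_pos (by simpa using hns : 0 < n * s)).2 hs0
    exact_mod_cast this
  have t_le_m : t ≤ m := (le_abs_self t).trans <|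
    abs_le_of_sq_le_sq (sq_le_sq_of_abs_sq_sub_sq_add_mul_sq_le n_pos.ne' hmn.le) m_pos.le
  have t_le_m' : (t : ℝ) ≤ m := by exact_mod_cast t_le_m
  have one_le_n : (1 : ℝ) ≤ n := by exact_mod_cast n_pos
  gcongr
  exact le_mul_of_one_le_left hs0.le one_le_n

/-- For an integer `t ≥ 1` with `D = t² + 4` squarefree, `ε = (t + √D)/2` is an
algebraic integer lying in `ℚ(√D) ⊆ ℝ`, it is a unit of the ring of integers of
`ℚ(√D)` of norm `ε·ε̄ = -1`, and it is the fundamental unit: every unit `u > 1`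
of the ring of integers satisfies `ε ≤ u`. -/
theorem stmt_16 (t : ℤ) (ht : 1 ≤ t) (hsf : Squarefree (t ^ 2 + 4)) :
    IsIntegral ℤ (((t : ℝ) + Real.sqrt ((t : ℝ) ^ 2 + 4)) / 2) ∧
    ((t : ℝ) + Real.sqrt ((t : ℝ) ^ 2 + 4)) / 2 ∈
      Algebra.adjoin ℚ ({Real.sqrt ((t : ℝ) ^ 2 + 4)} : Set ℝ) ∧
    (∃ η : ℝ, (η ∈ Algebra.adjoin ℚ ({Real.sqrt ((t : ℝ) ^ 2 + 4)} : Set ℝ) ∧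
        IsIntegral ℤ η) ∧
      (((t : ℝ) + Real.sqrt ((t : ℝ) ^ 2 + 4)) / 2) * η = 1) ∧
    (((t : ℝ) + Real.sqrt ((t : ℝ) ^ 2 + 4)) / 2) *
        (((t : ℝ) - Real.sqrt ((t : ℝ) ^ 2 + 4)) / 2) = -1 ∧
    (∀ u : ℝ, u ∈ Algebra.adjoin ℚ ({Real.sqrt ((t : ℝ) ^ 2 + 4)} : Set ℝ) →
      IsIntegral ℤ u →
      (∃ w : ℝ, (w ∈ Algebra.adjoin ℚ ({Real.sqrt ((t : ℝ) ^ 2 + 4)} : Set ℝ) ∧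
          IsIntegral ℤ w) ∧ u * w = 1) →
      1 < u → ((t : ℝ) + Real.sqrt ((t : ℝ) ^ 2 + 4)) / 2 ≤ u) := by
  set s := Real.sqrt ((t : ℝ) ^ 2 + 4)
  set ε := ((t : ℝ) + s) / 2 with hε
  have hss : s * s = (t : ℝ) ^ 2 + 4 := Real.mul_self_sqrt (by positivity)
  have hs0 : 0 < s := Real.sqrt_pos.2 (by positivity)
  have hεε : ε * ε = (1 : ℤ) • 1 + t • ε := by
    rw [zsmul_eq_mul, zsmul_eq_mul, hε]
    push_cast
    linear_combination hss / 4
  have ε_integral : IsIntegral ℤ ε := isIntegral_of_mul_self_eq hεε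
  have ε_mem : ε ∈ Algebra.adjoin ℚ {s} := by
    have hs_mem := Algebra.self_mem_adjoin_singleton ℚ s
    convert Subalgebra.smul_mem _ (add_mem (intCast_mem _ t) hs_mem) (1 / 2 : ℚ) using 1
    rw [Rat.smul_def, hε]
    push_cast
    ring
  refine ⟨ε_integral, ε_mem, ⟨ε - t, ⟨sub_mem ε_mem (intCast_mem _ t),
    ε_integral.sub isIntegral_algebraMap⟩, ?_⟩, ?_, ?_⟩
  · linear_combination hss / 4
  · linear_combination -hss / 4
  · rintro u hu hui ⟨w, ⟨hw, hwi⟩, huw⟩ hu1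
    exact half_add_sqrt_le_of_unit_mem_adjoin hsf (by exact_mod_cast hss) hs0 hu hui hw hwi huw hu1
end

section
/- There exist infinitely many pairwise GL₂(ℤ)-inequivalent binary cubic forms F(x, y) = a·x³ + b·x²y + c·xy² + d·y³ with integer coefficients, content 1 (gcd(a, b, c, d) = 1), and nonzero discriminant, such that for each such F there is a constant c₀ > 0 for which N_F(m) > c₀·(log m)^{17/19} holds for infinitely many positive integers m, where N_F(m) = #{(x, y) ∈ ℤ² : F(x, y) = m}. -/
/-- The value of the binary cubic form with coefficients `(a, b, c, d)` at `(x, y)`. -/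
def cubicVal (F : ℤ × ℤ × ℤ × ℤ) (x y : ℤ) : ℤ :=
  F.1 * x ^ 3 + F.2.1 * x ^ 2 * y + F.2.2.1 * x * y ^ 2 + F.2.2.2 * y ^ 3

/-- The discriminant of the binary cubic form with coefficients `(a, b, c, d)`. -/
def cubicDisc (F : ℤ × ℤ × ℤ × ℤ) : ℤ :=
  18 * F.1 * F.2.1 * F.2.2.1 * F.2.2.2 - 4 * F.2.1 ^ 3 * F.2.2.2
    + F.2.1 ^ 2 * F.2.2.1 ^ 2 - 4 * F.1 * F.2.2.1 ^ 3 - 27 * F.1 ^ 2 * F.2.2.2 ^ 2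

/-- The content of the binary cubic form with coefficients `(a, b, c, d)`. -/
def cubicContent (F : ℤ × ℤ × ℤ × ℤ) : ℕ :=
  Nat.gcd (Nat.gcd F.1.natAbs F.2.1.natAbs) (Nat.gcd F.2.2.1.natAbs F.2.2.2.natAbs)

/-- `GL₂(ℤ)`-equivalence of binary cubic forms. -/
def cubicEquiv (F F' : ℤ × ℤ × ℤ × ℤ) : Prop :=
  ∃ p q r s : ℤ, (p * s - q * r = 1 ∨ p * s - q * r = -1) ∧
    ∀ x y : ℤ, cubicVal F' x y = cubicVal F (p * x + q * y) (r * x + s * y)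

/-- The number of integral representations of `m` by the binary cubic form `F`. -/
noncomputable def numReps (F : ℤ × ℤ × ℤ × ℤ) (m : ℤ) : ℕ :=
  Set.ncard {xy : ℤ × ℤ | cubicVal F xy.1 xy.2 = m}

/-!
A rational point `(x, y)` of the Mordell curve `y² = x³ - k` gives the rational solution
`(ty/x, 1/x)` of `u²v + kt²v³ = t²`, and a common denominator `D` of several such solutions turns
them into integral representations of `t²D³` by the form `u²v + kt²v³`. If `P₁, …, P_r` are
independent, the `N ^ r` points `∑ nᵢPᵢ` with `0 ≤ nᵢ < N` have naive height `O(N²)`, because the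
naive height satisfies the parallelogram inequality up to a constant. Hence
`log D = O(N ^ (r + 2))`, and the number of representations is at least a constant times
`(log m) ^ (r / (r + 2))` for infinitely many `m`.

Elkies found a `k` with `r = 17`. Independence of the points is checked by `2`-descent: for each of
`17` primes `p` and a root `θ ∈ ℤ_p` of `θ³ = k`, the Legendre symbol of `x - θ` is a character of
the Mordell–Weil group, and these characters form a triangular matrix on the points. The
discriminant `-4kt²` separates the forms for different `t`.
-/

open WeierstrassCurve WeierstrassCurve.Affine WeierstrassCurve.Affine.Point

section SymmetricSquare

variable {K : Type*} [Field K] {W : WeierstrassCurve K}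

lemma addSubMap_eval (v : Fin 3 → K) :
    (fun i ↦ (addSubMap W i).eval v) =
      ![v 0 ^ 2 - W.b₄ * v 0 * v 2 - W.b₆ * v 1 * v 2 - W.b₈ * v 2 ^ 2,
        2 * v 1 * v 0 + W.b₂ * v 0 * v 2 + W.b₄ * v 1 * v 2 + W.b₆ * v 2 ^ 2,
        v 1 ^ 2 - 4 * v 0 * v 2] := by
  ext i
  fin_cases i <;> simp [addSubMap]

lemma addSubMap_sym2x_zero (P : W.toAffine.Point) :
    (fun i ↦ (addSubMap W i).eval (sym2x P 0)) = sym2x P P := by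
  rw [addSubMap_eval]
  rcases P with _ | ⟨x, y, h⟩
  · rw [← zero_def]
    ext i
    fin_cases i <;> simp
  · rw [sym2x_some_zero, sym2x_some_some]
    ext i
    fin_cases i <;> simp <;> ring

variable [DecidableEq K]

lemma addSubMap_sym2x_of_X_ne {x₁ y₁ x₂ y₂ : K} (h₁ : W.toAffine.Nonsingular x₁ y₁)
    (h₂ : W.toAffine.Nonsingular x₂ y₂) (hx : x₁ ≠ x₂) :
    (fun i ↦ (addSubMap W i).eval (sym2x (some x₁ y₁ h₁) (some x₂ y₂ h₂))) =
      (x₁ - x₂) ^ 2 • sym2x (some x₁ y₁ h₁ + some x₂ y₂ h₂) (some x₁ y₁ h₁ - some x₂ y₂ h₂) := by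
  have e₁ := (equation_iff ..).1 h₁.1
  have e₂ := (equation_iff ..).1 h₂.1
  have hx' : x₁ - x₂ ≠ 0 := sub_ne_zero.2 hx
  rw [addSubMap_eval, sub_eq_add_neg (some x₁ y₁ h₁), neg_some, add_of_X_ne hx, add_of_X_ne hx]
  simp only [slope_of_X_ne hx, addX, negY, sym2x_some_some, b₂, b₄, b₆, b₈]
  ext i
  fin_cases i <;> simp <;> field_simp <;> grind

lemma addSubMap_sym2x_self_of_Y_ne {x y : K} (h : W.toAffine.Nonsingular x y)
    (hy : y ≠ W.toAffine.negY x y) :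
    (fun i ↦ (addSubMap W i).eval (sym2x (some x y h) (some x y h))) =
      (y - W.toAffine.negY x y) ^ 2 • sym2x (some x y h + some x y h) 0 := by
  have e := (equation_iff ..).1 h.1
  have hy' := sub_ne_zero.2 hy
  rw [addSubMap_eval, add_self_of_Y_ne hy, sym2x_some_some, sym2x_some_zero,
    slope_of_Y_ne rfl hy]
  simp only [addX, b₂, b₄, b₆, b₈]
  ext i
  fin_cases i <;> simp [-negY] <;> field_simp
  · rw [negY]
    linear_combination (W.a₁ ^ 2 + 4 * W.a₂ + 8 * x) * e
  · rw [negY]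
    linear_combination -4 * e
  · ring

lemma addSubMap_sym2x_self_of_Y_eq {x y : K} (h : W.toAffine.Nonsingular x y)
    (hy : y = W.toAffine.negY x y) :
    (fun i ↦ (addSubMap W i).eval (sym2x (some x y h) (some x y h))) =
      (x ^ 4 - W.b₄ * x ^ 2 - 2 * W.b₆ * x - W.b₈) • sym2x (some x y h + some x y h) 0 := by
  have e := (equation_iff ..).1 h.1
  rw [addSubMap_eval, add_self_of_Y_eq hy, sym2x_some_some, sym2x_zero_zero]
  simp only [negY] at hy
  ext i
  fin_cases i <;> simp [b₂, b₄, b₆, b₈] <;> grind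

lemma exists_addSubMap_sym2x_self_eq_smul [W.IsElliptic] (P : W.toAffine.Point) :
    ∃ c : K, c ≠ 0 ∧ (fun i ↦ (addSubMap W i).eval (sym2x P P)) = c • sym2x (P + P) 0 := by
  suffices ∃ c : K, (fun i ↦ (addSubMap W i).eval (sym2x P P)) = c • sym2x (P + P) 0 by
    obtain ⟨c, hc⟩ := this
    refine ⟨c, ?_, hc⟩
    rintro rfl
    exact addSubMap_ne_zero W (sym2x_ne_zero P P) (hc.trans (zero_smul ..))
  rcases P with _ | ⟨x, y, h⟩
  · refine ⟨1, ?_⟩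
    rw [← zero_def, addSubMap_sym2x_zero, add_zero, one_smul]
  by_cases hy : y = W.toAffine.negY x y
  · exact ⟨_, addSubMap_sym2x_self_of_Y_eq h hy⟩
  · exact ⟨_, addSubMap_sym2x_self_of_Y_ne h hy⟩

lemma exists_addSubMap_sym2x_eq_smul [W.IsElliptic] (P Q : W.toAffine.Point) :
    ∃ c : K, c ≠ 0 ∧
      (fun i ↦ (addSubMap W i).eval (sym2x P Q)) = c • sym2x (P + Q) (P - Q) := by
  rcases P with _ | ⟨x₁, y₁, h₁⟩
  · refine ⟨1, one_ne_zero, ?_⟩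
    rw [← zero_def, sym2x_comm, addSubMap_sym2x_zero, zero_add, zero_sub, sym2x_neg_right,
      one_smul]
  rcases Q with _ | ⟨x₂, y₂, h₂⟩
  · refine ⟨1, one_ne_zero, ?_⟩
    rw [← zero_def, addSubMap_sym2x_zero, add_zero, sub_zero, one_smul]
  by_cases hx : x₁ = x₂
  · rcases (X_eq_iff (h₁ := h₁) (h₂ := h₂)).1 hx with h | h
    · rw [← h, sub_self]
      exact exists_addSubMap_sym2x_self_eq_smul _
    · rw [h, neg_add_cancel, ← neg_add', sym2x_neg_left, sym2x_neg_right, sym2x_comm 0]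
      exact exists_addSubMap_sym2x_self_eq_smul _
  · exact ⟨_, pow_ne_zero 2 (sub_ne_zero.2 hx), addSubMap_sym2x_of_X_ne h₁ h₂ hx⟩

end SymmetricSquare

section NaiveHeight

variable {K : Type*} [Field K] [Height.AdmissibleAbsValues K] {W : WeierstrassCurve K}

/-- The naive logarithmic height of a point: the height of its `x`-coordinate in `ℙ¹`. -/
noncomputable def naiveHeight (P : W.toAffine.Point) : ℝ :=
  Height.logHeight P.xRep

lemma naiveHeight_nonneg (P : W.toAffine.Point) : 0 ≤ naiveHeight P :=
  Height.logHeight_nonneg _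

variable (W) in
lemma exists_abs_logHeight_sym2x_sub_le :
    ∃ C, ∀ P Q : W.toAffine.Point,
      |Height.logHeight (sym2x P Q) - (naiveHeight P + naiveHeight Q)| ≤ C := by
  obtain ⟨C, hC⟩ := Height.abs_logHeight_sym2_sub_le K
  have eta (P : W.toAffine.Point) : P.xRep = ![P.xRep 0, P.xRep 1] := (List.ofFn_inj.mp rfl)
  refine ⟨C, fun P Q ↦ ?_⟩
  have h := hC (eta P ▸ xRep_ne_zero P) (eta Q ▸ xRep_ne_zero Q)
  rwa [← eta P, ← eta Q] at h

variable [DecidableEq K] [W.IsElliptic]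

variable (W) in
lemma exists_naiveHeight_add_add_naiveHeight_sub_le :
    ∃ C, 0 ≤ C ∧ ∀ P Q : W.toAffine.Point,
      naiveHeight (P + Q) + naiveHeight (P - Q) ≤ 2 * naiveHeight P + 2 * naiveHeight Q + C := by
  obtain ⟨C₁, h₁⟩ := abs_logHeight_addSubMap_sub_two_mul_logHeight_le W
  obtain ⟨C₂, h₂⟩ := exists_abs_logHeight_sym2x_sub_le W
  refine ⟨|C₁ + 3 * C₂|, abs_nonneg _, fun P Q ↦ ?_⟩
  obtain ⟨c, hc, h⟩ := exists_addSubMap_sym2x_eq_smul P Q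
  have hmap := h₁ (sym2x P Q)
  rw [h, Height.logHeight_smul_eq_logHeight _ hc] at hmap
  have hPQ := h₂ P Q
  have haddsub := h₂ (P + Q) (P - Q)
  rw [abs_le] at hmap hPQ haddsub
  linarith [le_abs_self (C₁ + 3 * C₂)]

end NaiveHeight

section QuadraticGrowth

variable {A : Type*} [AddCommGroup A] {h : A → ℝ} {C : ℝ}

lemma le_add_mul_sq_nsmul_of_parallelogram_le (h_nonneg : ∀ a, 0 ≤ h a) (hC : 0 ≤ C)
    (hpar : ∀ a b, h (a + b) + h (a - b) ≤ 2 * h a + 2 * h b + C) (a : A) (n : ℕ) :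
    h (n • a) ≤ h 0 + (2 * h a + C) * n ^ 2 := by
  have increment_le (n : ℕ) : h ((n + 1) • a) - h (n • a) ≤ (2 * h a + C) * (n + 1) := by
    induction n with
    | zero =>
      simp only [zero_add, one_nsmul, zero_nsmul, Nat.cast_zero, mul_one]
      linarith [h_nonneg 0, h_nonneg a]
    | succ n ih =>
      have hstep := hpar ((n + 1) • a) a
      rw [← succ_nsmul, succ_nsmul a n, add_sub_cancel_right, ← succ_nsmul] at hstep
      push_cast
      linarith
  induction n with
  | zero => simp
  | succ n ih =>
    have hcoeff : 0 ≤ (2 * h a + C) * n := by have := h_nonneg a; positivity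
    push_cast
    linarith [increment_le n]

lemma exists_forall_sum_nsmul_le_mul_sq_of_parallelogram_le (h_nonneg : ∀ a, 0 ≤ h a)
    (hC : 0 ≤ C) (hpar : ∀ a b, h (a + b) + h (a - b) ≤ 2 * h a + 2 * h b + C)
    {ι : Type*} (s : Finset ι) (a : ι → A) :
    ∃ B, 0 ≤ B ∧ ∀ N : ℕ, 1 ≤ N → ∀ n : ι → ℕ, (∀ i, n i ≤ N) →
      h (∑ i ∈ s, n i • a i) ≤ B * N ^ 2 := by
  classical
  induction s using Finset.induction_on with
  | empty =>
    refine ⟨h 0, h_nonneg 0, fun N hN n _ ↦ ?_⟩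
    have hN' : (1 : ℝ) ≤ N ^ 2 := one_le_pow₀ (mod_cast hN)
    simpa using le_mul_of_one_le_right (h_nonneg 0) hN'
  | insert j s hj ih =>
    obtain ⟨B, hB, ih⟩ := ih
    have h₀ := h_nonneg 0
    have hₐ := h_nonneg (a j)
    refine ⟨2 * (h 0 + (2 * h (a j) + C)) + 2 * B + C, by positivity, fun N hN n hn ↦ ?_⟩
    have hN' : (1 : ℝ) ≤ N ^ 2 := one_le_pow₀ (mod_cast hN)
    have hsum : h (∑ i ∈ insert j s, n i • a i) ≤
        2 * h (n j • a j) + 2 * h (∑ i ∈ s, n i • a i) + C := by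
      rw [Finset.sum_insert hj]
      linarith [hpar (n j • a j) (∑ i ∈ s, n i • a i),
        h_nonneg (n j • a j - ∑ i ∈ s, n i • a i)]
    have hmul : h (n j • a j) ≤ h 0 + (2 * h (a j) + C) * N ^ 2 :=
      (le_add_mul_sq_nsmul_of_parallelogram_le h_nonneg hC hpar _ _).trans
        (by have := hn j; gcongr)
    calc h (∑ i ∈ insert j s, n i • a i)
        ≤ 2 * (h 0 + (2 * h (a j) + C) * N ^ 2) + 2 * (B * N ^ 2) + C := by
          linarith [ih N hN n hn]
      _ ≤ 2 * (h 0 * N ^ 2 + (2 * h (a j) + C) * N ^ 2) + 2 * (B * N ^ 2) + C * N ^ 2 := by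
          gcongr
          · exact le_mul_of_one_le_right h₀ hN'
          · exact le_mul_of_one_le_right hC hN'
      _ = _ := by ring

end QuadraticGrowth

section Descent

lemma linearIndependent_int_of_linearIndependent_zmod {A V ι : Type*} [AddCommGroup A]
    [AddCommGroup V] {m : ℕ} (hm : 1 < m) [Module (ZMod m) V]
    (torsion_free : ∀ a : A, m • a = 0 → a = 0) (φ : A →+ V) {a : ι → A}
    (ha : LinearIndependent (ZMod m) (φ ∘ a)) : LinearIndependent ℤ a := by
  rw [linearIndependent_iff'] at ha ⊢
  intro s
  have dvd_coeff (g : ι → ℤ) (hg : ∑ i ∈ s, g i • a i = 0) (i : ι) (hi : i ∈ s) :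
      (m : ℤ) ∣ g i := by
    rw [← ZMod.intCast_zmod_eq_zero_iff_dvd]
    refine ha s (fun i ↦ (g i : ZMod m)) ?_ i hi
    simpa [Int.cast_smul_eq_zsmul] using congrArg φ hg
  have pow_dvd_coeff (k : ℕ) (g : ι → ℤ) (hg : ∑ i ∈ s, g i • a i = 0) (i : ι) (hi : i ∈ s) :
      (m : ℤ) ^ k ∣ g i := by
    induction k generalizing g with
    | zero => simp
    | succ k ih =>
      have hquot (i) (hi : i ∈ s) : g i = m * (g i / m) :=
        (Int.mul_ediv_cancel' (dvd_coeff g hg i hi)).symm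
      have hrel : ∑ i ∈ s, (g i / m) • a i = 0 := by
        refine torsion_free _ ?_
        rw [← hg, Finset.smul_sum]
        refine Finset.sum_congr rfl fun i hi ↦ ?_
        rw [← natCast_zsmul, smul_smul, ← hquot i hi]
      rw [hquot i hi, pow_succ']
      exact mul_dvd_mul_left _ (ih _ hrel)
  intro g hg i hi
  refine Int.eq_zero_of_abs_lt_dvd (pow_dvd_coeff (g i).natAbs g hg i hi) ?_
  rw [Int.abs_eq_natAbs]
  exact_mod_cast Nat.lt_pow_self hm

lemma linearIndependent_of_triangular {R M ι : Type*} [Ring R] [IsDomain R] [AddCommGroup M]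
    [Module R M] [Module.IsTorsionFree R M] [LinearOrder ι] {v : ι → ι → M}
    (hlt : ∀ i j, j < i → v i j = 0) (hdiag : ∀ i, v i i ≠ 0) : LinearIndependent R v := by
  rw [linearIndependent_iff']
  intro s g hg
  classical
  by_contra! hne
  have hT : (s.filter (g · ≠ 0)).Nonempty := by simpa [Finset.Nonempty] using hne
  obtain ⟨hjs, hgj⟩ := Finset.mem_filter.1 (Finset.min'_mem _ hT)
  set j := (s.filter (g · ≠ 0)).min' hT
  have hsum : ∑ i ∈ s, g i • v i j = g j • v j j := by
    refine Finset.sum_eq_single_of_mem j hjs fun i hi hij ↦ ?_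
    rcases lt_or_gt_of_ne hij with h | h
    · have hgi : g i = 0 := by
        by_contra hgi
        exact h.not_ge (Finset.min'_le _ _ (Finset.mem_filter.2 ⟨hi, hgi⟩))
      rw [hgi, zero_smul]
    · rw [hlt i j h, smul_zero]
  refine smul_ne_zero hgj (hdiag j) ?_
  rw [← hsum]
  simpa using congrFun hg j

end Descent

section TwoDescent

variable {F L : Type*} [Field F] [Field L] [Algebra F L] {W : WeierstrassCurve F}

/-- The map `P ↦ x(P) - θ`, with value `1` at the point at infinity. For `θ` a root of the cubic
`x³ + a₂x² + a₄x + a₆` it is the `2`-descent homomorphism modulo squares. -/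
def xSub (θ : L) : W.toAffine.Point → L
  | .zero => 1
  | .some x _ _ => algebraMap F L x - θ

lemma xSub_zero (θ : L) : xSub θ (0 : W.toAffine.Point) = 1 := rfl

lemma xSub_some (θ : L) {x y : F} (h : W.toAffine.Nonsingular x y) :
    xSub θ (some x y h) = algebraMap F L x - θ := rfl

lemma xSub_ne_zero (hW : ∀ x : F, x ^ 3 + W.a₂ * x ^ 2 + W.a₄ * x + W.a₆ ≠ 0) {θ : L}
    (hθ : θ ^ 3 + algebraMap F L W.a₂ * θ ^ 2 + algebraMap F L W.a₄ * θ +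
      algebraMap F L W.a₆ = 0) (P : W.toAffine.Point) : xSub θ P ≠ 0 := by
  rcases P with _ | ⟨x, y, h⟩
  · exact one_ne_zero
  · rw [xSub_some, sub_ne_zero]
    rintro rfl
    exact hW x ((algebraMap F L).injective (by simpa using hθ))

variable [W.IsCharNeTwoNF] [DecidableEq F]

lemma isSquare_xSub_mul_xSub_mul_xSub_add {θ : L}
    (hθ : θ ^ 3 + algebraMap F L W.a₂ * θ ^ 2 + algebraMap F L W.a₄ * θ +
      algebraMap F L W.a₆ = 0) (P Q : W.toAffine.Point) :
    IsSquare (xSub θ P * xSub θ Q * xSub θ (P + Q)) := by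
  rcases P with _ | ⟨x₁, y₁, h₁⟩
  · simp [← zero_def, xSub_zero]
  rcases Q with _ | ⟨x₂, y₂, h₂⟩
  · simp [← zero_def, xSub_zero]
  by_cases hneg : x₁ = x₂ ∧ y₁ = W.toAffine.negY x₂ y₂
  · rw [add_of_Y_eq hneg.1 hneg.2, xSub_zero, mul_one, xSub_some, xSub_some, hneg.1]
    exact ⟨_, rfl⟩
  rw [add_some hneg]
  simp only [xSub_some]
  -- The line through `P` and `Q` meets the curve where `(x - x₁)(x - x₂)(x - x₃) = 0`; at `x = θ`
  -- the curve equation reads `y² = 0`, so the left side is the square of the line's ordinate.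
  have hline := congrArg (Polynomial.aeval θ) (addPolynomial_slope h₁.1 h₂.1 hneg)
  rw [addPolynomial_eq] at hline
  set ℓ := W.toAffine.slope x₁ x₂ y₁ y₂
  simp only [Cubic.toPoly, addX, a₁_of_isCharNeTwoNF, a₃_of_isCharNeTwoNF, zero_mul, add_zero,
    sub_zero, map_one, _root_.map_zero, map_ofNat, map_neg, map_add, map_sub, map_mul, map_pow,
    Polynomial.aeval_C, Polynomial.aeval_X] at hline ⊢
  refine ⟨algebraMap F L ℓ * (θ - algebraMap F L x₁) + algebraMap F L y₁, ?_⟩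
  linear_combination -hline - hθ

/-- The character `P ↦ χ (x(P) - θ)` of the group of points attached to a quadratic
character `χ`. -/
def xSubChar (hW : ∀ x : F, x ^ 3 + W.a₂ * x ^ 2 + W.a₄ * x + W.a₆ ≠ 0) {θ : L}
    (hθ : θ ^ 3 + algebraMap F L W.a₂ * θ ^ 2 + algebraMap F L W.a₄ * θ +
      algebraMap F L W.a₆ = 0) (χ : Lˣ →* ℤˣ) : W.toAffine.Point →+ Additive ℤˣ where
  toFun P := .ofMul (χ (.mk0 (xSub θ P) (xSub_ne_zero hW hθ P)))
  map_zero' := by simp [xSub_zero]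
  map_add' P Q := by
    obtain ⟨r, hr⟩ := isSquare_xSub_mul_xSub_mul_xSub_add hθ P Q
    have hne := xSub_ne_zero hW hθ
    have hr0 : r ≠ 0 := by
      rintro rfl
      simp [hne] at hr
    have hunits : Units.mk0 _ (hne P) * .mk0 _ (hne Q) * .mk0 _ (hne (P + Q)) =
        .mk0 r hr0 * .mk0 r hr0 := Units.ext hr
    have hχ := congrArg χ hunits
    rw [map_mul, map_mul, map_mul, Int.units_mul_self, mul_eq_one_iff_inv_eq] at hχ
    rw [← hχ, Int.units_inv_eq_self, ofMul_mul]

lemma eq_zero_of_two_nsmul_eq_zero (h2 : (2 : F) ≠ 0)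
    (hW : ∀ x : F, x ^ 3 + W.a₂ * x ^ 2 + W.a₄ * x + W.a₆ ≠ 0) {P : W.toAffine.Point}
    (hP : 2 • P = 0) : P = 0 := by
  rcases P with _ | ⟨x, y, h⟩
  · rfl
  rw [two_nsmul, add_eq_zero_iff_eq_neg, neg_some, some.injEq] at hP
  have hy : y = 0 := by
    have hneg : y = -y := by simpa [negY] using hP.2
    exact (mul_eq_zero.1 (by linear_combination hneg : 2 * y = 0)).resolve_left h2
  refine absurd ?_ (hW x)
  simpa [hy] using ((equation_iff ..).1 h.1).symm

end TwoDescent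

section PadicQuadraticCharacter

variable {p : ℕ} [Fact p.Prime]

lemma norm_mul_zpow_neg_valuation_le_one (x : ℚ_[p]) :
    ‖x * (p : ℚ_[p]) ^ (-x.valuation)‖ ≤ 1 := by
  rcases eq_or_ne x 0 with rfl | hx
  · simp
  have hp : (p : ℝ) ≠ 0 := mod_cast (Fact.out : p.Prime).ne_zero
  rw [norm_mul, Padic.norm_eq_zpow_neg_valuation hx, norm_zpow, Padic.norm_p, inv_zpow,
    ← zpow_neg, ← zpow_add₀ hp]
  simp

variable (p) in
/-- The angular component of a `p`-adic number: the residue of `p ^ (-v(x)) * x` modulo `p`. -/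
noncomputable def angularComponent : ℚ_[p] →*₀ ZMod p where
  toFun x := PadicInt.toZMod ⟨x * (p : ℚ_[p]) ^ (-x.valuation),
    norm_mul_zpow_neg_valuation_le_one x⟩
  map_zero' := by
    rw [← _root_.map_zero (PadicInt.toZMod (p := p))]
    congr 1
    exact Subtype.ext (zero_mul _)
  map_one' := by
    rw [← _root_.map_one (PadicInt.toZMod (p := p))]
    congr 1
    exact Subtype.ext (by simp)
  map_mul' x y := by
    refine .trans (congrArg PadicInt.toZMod (Subtype.ext ?_)) (_root_.map_mul PadicInt.toZMod _ _)
    change x * y * _ = x * _ * (y * _)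
    rcases eq_or_ne x 0 with rfl | hx
    · simp
    rcases eq_or_ne y 0 with rfl | hy
    · simp
    have hp : (p : ℚ_[p]) ≠ 0 := mod_cast (Fact.out : p.Prime).ne_zero
    rw [Padic.valuation_mul hx hy, neg_add, zpow_add₀ hp]
    ring

lemma toZMod_eq_zero_iff_norm_lt_one (z : ℤ_[p]) : PadicInt.toZMod z = 0 ↔ ‖z‖ < 1 := by
  rw [← RingHom.mem_ker, PadicInt.ker_toZMod, IsLocalRing.mem_maximalIdeal, PadicInt.mem_nonunits]

lemma angularComponent_coe_padicInt {z : ℤ_[p]} (hz : PadicInt.toZMod z ≠ 0) :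
    angularComponent p z = PadicInt.toZMod z := by
  have hnorm : ‖z‖ = 1 :=
    (PadicInt.norm_le_one z).antisymm (not_lt.1 (mt (toZMod_eq_zero_iff_norm_lt_one z).2 hz))
  have hval : (z : ℚ_[p]).valuation = 0 := by
    have hp : 1 < (p : ℝ) := mod_cast (Fact.out : p.Prime).one_lt
    have hz0 : (z : ℚ_[p]) ≠ 0 := norm_ne_zero_iff.1 (by simp [hnorm])
    have hpow := Padic.norm_eq_zpow_neg_valuation hz0
    rw [PadicInt.padic_norm_e_of_padicInt, hnorm, eq_comm,
      zpow_eq_one_iff_right₀ (by positivity) hp.ne'] at hpow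
    exact neg_eq_zero.1 hpow
  refine congrArg PadicInt.toZMod (Subtype.ext ?_)
  simp [hval]

variable (p) in
/-- The quadratic character of the angular component of a nonzero `p`-adic number. -/
noncomputable def padicQuadraticChar : ℚ_[p]ˣ →* ℤˣ :=
  (quadraticChar (ZMod p)).toUnitHom.comp (Units.map (angularComponent p : ℚ_[p] →* ZMod p))

lemma coe_padicQuadraticChar (x : ℚ_[p]ˣ) :
    (padicQuadraticChar p x : ℤ) = quadraticChar (ZMod p) (angularComponent p x) := rfl

lemma padicQuadraticChar_eq_legendreSym {θ : ℤ_[p]} {θ₀ a d : ℤ} (hθ : PadicInt.toZMod θ = θ₀)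
    (had : legendreSym p (a - θ₀ * d ^ 2) ≠ 0) {x : ℚ_[p]ˣ}
    (hx : (x : ℚ_[p]) * d ^ 2 = a - θ * d ^ 2) :
    (padicQuadraticChar p x : ℤ) = legendreSym p (a - θ₀ * d ^ 2) := by
  have hres : PadicInt.toZMod ((a : ℤ_[p]) - θ * (d : ℤ_[p]) ^ 2) =
      ((a - θ₀ * d ^ 2 : ℤ) : ZMod p) := by
    simp [hθ]
  have hres0 : ((a - θ₀ * d ^ 2 : ℤ) : ZMod p) ≠ 0 := mt (legendreSym.eq_zero_iff p _).2 had
  have hang : angularComponent p x * angularComponent p d ^ 2 =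
      ((a - θ₀ * d ^ 2 : ℤ) : ZMod p) := by
    rw [← hres, ← angularComponent_coe_padicInt (hres ▸ hres0), ← map_pow, ← map_mul, hx]
    simp
  have hd0 : angularComponent p d ≠ 0 := by
    intro hd
    simp [← hang, hd] at hres0
  rw [coe_padicQuadraticChar, legendreSym, ← hang, map_mul, map_pow, quadraticChar_sq_one hd0,
    mul_one]

lemma exists_padicInt_root_of_simple_root {f : Polynomial ℤ} {a : ℤ} (hroot : (p : ℤ) ∣ f.eval a)
    (hsimple : ¬ (p : ℤ) ∣ f.derivative.eval a) :
    ∃ z : ℤ_[p], Polynomial.aeval z f = 0 ∧ PadicInt.toZMod z = a := by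
  have heval (g : Polynomial ℤ) : Polynomial.aeval (a : ℤ_[p]) g = ((g.eval a : ℤ) : ℤ_[p]) := by
    simpa using Polynomial.aeval_algebraMap_apply ℤ_[p] a g
  have hderiv : ‖Polynomial.aeval (a : ℤ_[p]) f.derivative‖ = 1 := by
    refine (PadicInt.norm_le_one _).antisymm (not_lt.1 fun h ↦ hsimple ?_)
    rwa [heval, PadicInt.norm_int_lt_one_iff_dvd] at h
  have hval : ‖Polynomial.aeval (a : ℤ_[p]) f‖ < 1 := by
    rwa [heval, PadicInt.norm_int_lt_one_iff_dvd]
  obtain ⟨z, hz, hza, -⟩ := hensels_lemma (F := f) (a := (a : ℤ_[p])) (by simpa [hderiv])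
  refine ⟨z, hz, ?_⟩
  rw [hderiv] at hza
  have := (toZMod_eq_zero_iff_norm_lt_one _).2 hza
  simpa [sub_eq_zero] using this
end PadicQuadraticCharacter

section LogarithmicGrowth

lemma exists_infinite_mul_log_rpow_lt {f m : ℕ → ℕ} {B : ℝ} {q r : ℕ} (hq : q ≠ 0) (hr : r ≠ 0)
    (hm : ∀ N, N ≤ m N) (hlog : ∀ N, 1 ≤ N → Real.log (m N) ≤ B * N ^ q)
    (hf : ∀ N, N ^ r ≤ f (m N) + 1) :
    ∃ c₀ : ℝ, 0 < c₀ ∧ {m : ℕ | 0 < m ∧ c₀ * Real.log m ^ ((r : ℝ) / q) < f m}.Infinite := by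
  have hB : 0 < B := by
    have hm2 : (1 : ℝ) < m 2 := mod_cast (hm 2)
    have hpos := (Real.log_pos hm2).trans_le (hlog 2 one_le_two)
    exact pos_of_mul_pos_left hpos (by positivity)
  set E : ℝ := B ^ ((r : ℝ) / q)
  have hE : 0 < E := Real.rpow_pos_of_pos hB _
  have log_rpow_le (N : ℕ) (hN : 1 ≤ N) : Real.log (m N) ^ ((r : ℝ) / q) ≤ E * N ^ r := by
    calc Real.log (m N) ^ ((r : ℝ) / q) ≤ (B * N ^ q) ^ ((r : ℝ) / q) :=
          Real.rpow_le_rpow (Real.log_natCast_nonneg _) (hlog N hN) (by positivity)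
      _ = E * N ^ r := by
          rw [Real.mul_rpow hB.le (by positivity), ← Real.rpow_natCast_mul (by positivity),
            mul_div_cancel₀ _ (Nat.cast_ne_zero.2 hq), Real.rpow_natCast]
  refine ⟨1 / (4 * E), by positivity, Set.infinite_of_forall_exists_gt fun a ↦ ?_⟩
  refine ⟨m (a + 2), ⟨by linarith [hm (a + 2)], ?_⟩, by linarith [hm (a + 2)]⟩
  have two_le : (2 : ℝ) ≤ ((a + 2 : ℕ) : ℝ) ^ r :=
    mod_cast (Nat.le_add_left 2 a).trans (Nat.le_self_pow hr _)
  have hcount : (((a + 2 : ℕ) : ℝ)) ^ r ≤ f (m (a + 2)) + 1 := mod_cast hf (a + 2)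
  calc 1 / (4 * E) * Real.log (m (a + 2)) ^ ((r : ℝ) / q)
      ≤ 1 / (4 * E) * (E * ((a + 2 : ℕ) : ℝ) ^ r) := by
        gcongr
        exact log_rpow_le _ (by omega)
    _ = ((a + 2 : ℕ) : ℝ) ^ r / 4 := by field_simp
    _ < f (m (a + 2)) := by linarith

end LogarithmicGrowth

section MordellCurve

/-- The Mordell curve `y² = x³ - k` over `ℚ`. -/
def mordellCurve (k : ℤ) : WeierstrassCurve ℚ := ⟨0, 0, 0, 0, -k⟩

/-- The binary cubic form `u²v + kt²v³`. It takes the value `t²` at `(ty/x, 1/x)` for every point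
`(x, y)` of `mordellCurve k` with `x ≠ 0`. -/
def mordellForm (k : ℤ) (t : ℕ) : ℤ × ℤ × ℤ × ℤ := (0, 1, 0, k * t ^ 2)

/-- The product of the absolute value of the numerator and the denominator of the `x`-coordinate,
with value `1` at the point at infinity. On `mordellCurve k` it clears the denominators of `y/x`
and `1/x`. -/
def xNumMulDen {W : WeierstrassCurve ℚ} : W.toAffine.Point → ℕ
  | .zero => 1
  | .some x _ _ => x.num.natAbs * x.den

lemma log_xNumMulDen_le {W : WeierstrassCurve ℚ} (P : W.toAffine.Point) :
    Real.log (xNumMulDen P) ≤ 2 * naiveHeight P := by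
  rcases P with _ | ⟨x, y, h⟩
  · simpa [xNumMulDen] using naiveHeight_nonneg _
  rw [naiveHeight, xRep_some, ← Height.logHeight₁_eq_logHeight, Rat.logHeight₁_eq_log_max,
    xNumMulDen]
  set M : ℕ := max x.num.natAbs x.den
  have hle : x.num.natAbs * x.den ≤ M ^ 2 :=
    (Nat.mul_le_mul (le_max_left ..) (le_max_right ..)).trans_eq (sq M).symm
  rcases (x.num.natAbs * x.den).eq_zero_or_pos with h0 | hpos
  · rw [h0, Nat.cast_zero, Real.log_zero]
    exact mul_nonneg zero_le_two (Real.log_natCast_nonneg M)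
  · calc Real.log ((x.num.natAbs * x.den : ℕ) : ℝ) ≤ Real.log ((M : ℝ) ^ 2) :=
          Real.log_le_log (mod_cast hpos) (mod_cast hle)
      _ = 2 * Real.log M := by rw [Real.log_pow, Nat.cast_ofNat]

variable {k : ℤ}

instance : (mordellCurve k).IsCharNeTwoNF := ⟨rfl, rfl⟩

lemma isElliptic_mordellCurve (hk : k ≠ 0) : (mordellCurve k).IsElliptic := by
  refine ⟨isUnit_iff_ne_zero.2 ?_⟩
  simp [mordellCurve, Δ, b₂, b₄, b₆, b₈, hk]

lemma mordellCurve_equation_iff {x y : ℚ} :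
    (mordellCurve k).toAffine.Equation x y ↔ y ^ 2 = x ^ 3 - k := by
  simp [equation_iff, mordellCurve, sub_eq_add_neg]

lemma X_ne_zero_of_mordellCurve_equation (hk : 0 < k) {x y : ℚ}
    (h : (mordellCurve k).toAffine.Equation x y) : x ≠ 0 := by
  rintro rfl
  rw [mordellCurve_equation_iff] at h
  have hk' : (0 : ℚ) < k := mod_cast hk
  linarith [sq_nonneg y]

lemma xNumMulDen_ne_zero (hk : 0 < k) (P : (mordellCurve k).toAffine.Point) :
    xNumMulDen P ≠ 0 := by
  rcases P with _ | ⟨x, y, h⟩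
  · exact one_ne_zero
  · have := X_ne_zero_of_mordellCurve_equation hk h.1
    simp [xNumMulDen, this]

lemma exists_cubicVal_mordellForm_eq (hk : 0 < k) {t D : ℕ} (ht : t ≠ 0) (hD : D ≠ 0) {x y : ℚ}
    (h : (mordellCurve k).toAffine.Equation x y) (hdvd : x.num.natAbs * x.den ∣ D) :
    ∃ X Y : ℤ, cubicVal (mordellForm k t) X Y = (t ^ 2 * D ^ 3 : ℕ) ∧
      x = D / Y ∧ y = X / (t * Y) := by
  have hx := X_ne_zero_of_mordellCurve_equation hk h
  rw [mordellCurve_equation_iff] at h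
  obtain ⟨e, he⟩ : x.num * x.den ∣ (D : ℤ) := by
    rwa [Int.dvd_natCast, Int.natAbs_mul, Int.natAbs_natCast]
  have hDx : (D : ℚ) = x * x.den ^ 2 * e := by
    have he' : (D : ℚ) = x.num * x.den * e := mod_cast he
    rw [he', ← Rat.mul_den_eq_num x]
    ring
  obtain ⟨w, hw⟩ : ∃ w : ℤ, (w : ℚ) = x.den ^ 2 * y := by
    have hsq : (x.den ^ 2 * y) ^ 2 = ((x.den * x.num ^ 3 - k * x.den ^ 4 : ℤ) : ℚ) := by
      push_cast
      rw [← Rat.mul_den_eq_num x]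
      linear_combination (x.den : ℚ) ^ 4 * h
    exact IsIntegrallyClosed.exists_algebraMap_eq_of_isIntegral_pow two_pos
      (hsq ▸ isIntegral_algebraMap)
  have hden : (x.den : ℚ) ≠ 0 := mod_cast x.den_ne_zero
  have he0 : (e : ℚ) ≠ 0 := by
    rintro he0
    simp [he0, hD] at hDx
  refine ⟨t * e * w, x.den ^ 2 * e, ?_, ?_, ?_⟩
  · have : ((cubicVal (mordellForm k t) (t * e * w) (x.den ^ 2 * e) : ℤ) : ℚ) =
        t ^ 2 * (D : ℚ) ^ 3 := by
      simp only [cubicVal, mordellForm]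
      push_cast
      rw [hw, hDx]
      linear_combination (t : ℚ) ^ 2 * e ^ 3 * x.den ^ 6 * h
    exact_mod_cast this
  · push_cast
    rw [hDx]
    field_simp
  · push_cast
    rw [hw]
    field_simp

lemma finite_setOf_sq_mul_add_mul_cube_eq {A m : ℤ} (hA : 0 < A) (hm : m ≠ 0) :
    {z : ℤ × ℤ | cubicVal (0, 1, 0, A) z.1 z.2 = m}.Finite := by
  refine ((Set.finite_Icc (-|m|) |m|).prod (Set.finite_Icc (-|m|) |m|)).subset ?_
  rintro ⟨x, y⟩ h
  have hfactor : m = y * (x ^ 2 + A * y ^ 2) := by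
    rw [← h.out]
    simp only [cubicVal]
    ring
  have hy : |y| ≤ |m| :=
    Int.le_of_dvd (abs_pos.2 hm) ((abs_dvd_abs _ _).2 (hfactor ▸ dvd_mul_right ..))
  have hquad : x ^ 2 + A * y ^ 2 ≤ |m| :=
    Int.le_of_dvd (abs_pos.2 hm) ((dvd_abs _ _).2 (hfactor ▸ dvd_mul_left ..))
  have hx : |x| ≤ |m| := by
    have := Int.le_self_sq |x|
    rw [sq_abs] at this
    linarith [mul_nonneg hA.le (sq_nonneg y)]
  exact ⟨abs_le.1 hx, abs_le.1 hy⟩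

lemma card_le_numReps_mordellForm (hk : 0 < k) {t D : ℕ} (ht : t ≠ 0) (hD : D ≠ 0)
    (s : Finset (mordellCurve k).toAffine.Point) (h0 : 0 ∉ s)
    (hs : ∀ P ∈ s, xNumMulDen P ∣ D) :
    s.card ≤ numReps (mordellForm k t) (t ^ 2 * D ^ 3 : ℕ) := by
  have hsol (P : (mordellCurve k).toAffine.Point) (hP : P ∈ s) : ∃ z : ℤ × ℤ,
      cubicVal (mordellForm k t) z.1 z.2 = (t ^ 2 * D ^ 3 : ℕ) ∧
        ∃ h, P = some (D / z.2 : ℚ) (z.1 / (t * z.2)) h := by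
    rcases P with _ | ⟨x, y, h⟩
    · exact absurd hP h0
    · obtain ⟨X, Y, hval, rfl, rfl⟩ := exists_cubicVal_mordellForm_eq hk ht hD h.1 (hs _ hP)
      exact ⟨(X, Y), hval, h, rfl⟩
  choose! sol hval hsol using hsol
  rw [← Set.ncard_coe_finset, numReps]
  refine Set.ncard_le_ncard_of_injOn sol hval ?_
    (finite_setOf_sq_mul_add_mul_cube_eq (by positivity) (by positivity))
  intro P hP Q hQ hPQ
  obtain ⟨_, hP'⟩ := hsol P hP
  obtain ⟨_, hQ'⟩ := hsol Q hQ
  rw [hP', hQ', some.injEq, hPQ]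
  exact ⟨rfl, rfl⟩

end MordellCurve

section CountingRepresentations

lemma card_image_sum_nsmul_of_linearIndependent {A ι : Type*} [AddCommGroup A] [DecidableEq A]
    [Fintype ι] [DecidableEq ι] {a : ι → A} (ha : LinearIndependent ℤ a) (N : ℕ) :
    (Finset.univ.image fun n : ι → Fin N ↦ ∑ i, (n i : ℕ) • a i).card = N ^ Fintype.card ι := by
  rw [Finset.card_image_of_injective, Finset.card_univ, Fintype.card_fun, Fintype.card_fin]
  intro n n' h
  have hrel : ∑ i, (n i - n' i : ℤ) • a i = 0 := by
    simp only [sub_smul, Finset.sum_sub_distrib, natCast_zsmul]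
    exact sub_eq_zero.2 h
  funext i
  have := Fintype.linearIndependent_iff.1 ha _ hrel i
  omega

variable {k : ℤ} {ι : Type*} [Fintype ι] {P : ι → (mordellCurve k).toAffine.Point}

lemma exists_finset_card_eq_pow_and_forall_naiveHeight_le [Nonempty ι] (hk : k ≠ 0)
    (hP : LinearIndependent ℤ P) :
    ∃ B : ℝ, ∀ N : ℕ, ∃ s : Finset (mordellCurve k).toAffine.Point,
      s.card = N ^ Fintype.card ι ∧ ∀ Q ∈ s, naiveHeight Q ≤ B * N ^ 2 := by
  classical
  have := isElliptic_mordellCurve hk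
  obtain ⟨C, hC, hpar⟩ := exists_naiveHeight_add_add_naiveHeight_sub_le (mordellCurve k)
  obtain ⟨B, -, hheight⟩ := exists_forall_sum_nsmul_le_mul_sq_of_parallelogram_le
    naiveHeight_nonneg hC hpar Finset.univ P
  refine ⟨B, fun N ↦ ⟨_, card_image_sum_nsmul_of_linearIndependent hP N, fun Q hQ ↦ ?_⟩⟩
  obtain ⟨n, -, rfl⟩ := Finset.mem_image.1 hQ
  rcases N.eq_zero_or_pos with rfl | hN
  · exact (n (Classical.arbitrary ι)).elim0
  · exact hheight N hN _ fun i ↦ (n i).2.le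

lemma log_mul_prod_xNumMulDen_le (hk : 0 < k) {N r : ℕ} (hN : 1 ≤ N) {B : ℝ}
    {s : Finset (mordellCurve k).toAffine.Point} (hcard : s.card = N ^ r)
    (hs : ∀ Q ∈ s, naiveHeight Q ≤ B * N ^ 2) :
    Real.log ((N * ∏ Q ∈ s, xNumMulDen Q : ℕ) : ℝ) ≤ (1 + 2 * B) * N ^ (r + 2) := by
  have hN' : (N : ℝ) ≠ 0 := by positivity
  have hfactor (Q) (hQ : Q ∈ s) : Real.log (xNumMulDen Q) ≤ 2 * (B * N ^ 2) :=
    (log_xNumMulDen_le Q).trans (by linarith [hs Q hQ])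
  have hlogN : Real.log N ≤ N ^ (r + 2) :=
    (Real.log_le_self N.cast_nonneg).trans (mod_cast Nat.le_self_pow (by omega) N)
  have hne (Q) : (xNumMulDen Q : ℝ) ≠ 0 := mod_cast xNumMulDen_ne_zero hk Q
  rw [Nat.cast_mul, Nat.cast_prod, Real.log_mul hN' (Finset.prod_ne_zero_iff.2 fun Q _ ↦ hne Q),
    Real.log_prod fun Q _ ↦ hne Q]
  calc Real.log N + ∑ Q ∈ s, Real.log (xNumMulDen Q)
      ≤ N ^ (r + 2) + s.card • (2 * (B * N ^ 2)) :=
        add_le_add hlogN (Finset.sum_le_card_nsmul _ _ _ hfactor)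
    _ = (1 + 2 * B) * N ^ (r + 2) := by
        rw [hcard, nsmul_eq_mul]
        push_cast
        ring

theorem exists_infinite_mul_log_rpow_lt_numReps_mordellForm [Nonempty ι] (hk : 0 < k)
    (hP : LinearIndependent ℤ P) {t : ℕ} (ht : t ≠ 0) :
    ∃ c₀ : ℝ, 0 < c₀ ∧ {m : ℕ | 0 < m ∧
      c₀ * Real.log m ^ ((Fintype.card ι : ℝ) / (Fintype.card ι + 2 : ℕ)) <
        numReps (mordellForm k t) m}.Infinite := by
  classical
  obtain ⟨B, hbox⟩ := exists_finset_card_eq_pow_and_forall_naiveHeight_le hk.ne' hP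
  choose s hcard hheight using hbox
  -- The factor `N` only serves to make `D` unbounded.
  set D : ℕ → ℕ := fun N ↦ N * ∏ Q ∈ s N, xNumMulDen Q
  have hprod (N) : ∏ Q ∈ s N, xNumMulDen Q ≠ 0 :=
    Finset.prod_ne_zero_iff.2 fun Q _ ↦ xNumMulDen_ne_zero hk Q
  have hD {N} (hN : 1 ≤ N) : D N ≠ 0 := mul_ne_zero (by omega) (hprod N)
  refine exists_infinite_mul_log_rpow_lt (f := fun m ↦ numReps (mordellForm k t) m)
    (m := fun N ↦ t ^ 2 * D N ^ 3) (B := 2 * Real.log t + 3 * (1 + 2 * B)) (by omega)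
    Fintype.card_ne_zero (fun N ↦ ?_) (fun N hN ↦ ?_) fun N ↦ ?_
  · calc N ≤ D N := Nat.le_mul_of_pos_right _ (Nat.pos_of_ne_zero (hprod N))
      _ ≤ D N ^ 3 := Nat.le_self_pow three_ne_zero _
      _ ≤ t ^ 2 * D N ^ 3 := Nat.le_mul_of_pos_left _ (by positivity)
  · have hDN : (D N : ℝ) ≠ 0 := mod_cast hD hN
    have hone : (1 : ℝ) ≤ N ^ (Fintype.card ι + 2) := one_le_pow₀ (mod_cast hN)
    have hlogD := log_mul_prod_xNumMulDen_le hk hN (hcard N) (hheight N)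
    have hlogt := le_mul_of_one_le_right (Real.log_natCast_nonneg t) hone
    push_cast
    rw [Real.log_mul (by positivity) (by positivity), Real.log_pow, Real.log_pow]
    push_cast
    linarith
  · rcases N.eq_zero_or_pos with rfl | hN
    · simp [Fintype.card_ne_zero]
    rw [← hcard N]
    refine Nat.le_add_of_sub_le ((Finset.pred_card_le_card_erase (a := 0)).trans ?_)
    refine card_le_numReps_mordellForm hk ht (hD hN) _ (by simp) fun Q hQ ↦ ?_
    exact (Finset.dvd_prod_of_mem _ (Finset.mem_of_mem_erase hQ)).mul_left N

end CountingRepresentations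

section IndependenceCriterion

variable {k : ℤ}

lemma mordellCurve_cubic_ne_zero (hcube : ∀ q : ℚ, q ^ 3 ≠ k) (x : ℚ) :
    x ^ 3 + (mordellCurve k).a₂ * x ^ 2 + (mordellCurve k).a₄ * x + (mordellCurve k).a₆ ≠ 0 := by
  simpa [mordellCurve, sub_eq_zero, ← sub_eq_add_neg] using hcube x

lemma exists_addMonoidHom_eq_legendreSym (hcube : ∀ q : ℚ, q ^ 3 ≠ k) {p : ℕ} [Fact p.Prime]
    {θ₀ : ℤ} (hroot : (p : ℤ) ∣ θ₀ ^ 3 - k) (hsimple : ¬ (p : ℤ) ∣ 3 * θ₀ ^ 2) :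
    ∃ φ : (mordellCurve k).toAffine.Point →+ Additive ℤˣ, ∀ (a d : ℤ) (y : ℚ)
      (h : (mordellCurve k).toAffine.Nonsingular (a / d ^ 2 : ℚ) y), d ≠ 0 →
        legendreSym p (a - θ₀ * d ^ 2) ≠ 0 →
          ((φ (some _ y h)).toMul : ℤ) = legendreSym p (a - θ₀ * d ^ 2) := by
  obtain ⟨θ, hθ, hθ₀⟩ := exists_padicInt_root_of_simple_root
    (f := Polynomial.X ^ 3 - Polynomial.C k) (by simpa using hroot) (by simpa using hsimple)
  have hθ' : (θ : ℚ_[p]) ^ 3 + algebraMap ℚ ℚ_[p] (mordellCurve k).a₂ * θ ^ 2 +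
      algebraMap ℚ ℚ_[p] (mordellCurve k).a₄ * θ + algebraMap ℚ ℚ_[p] (mordellCurve k).a₆ = 0 := by
    have := congrArg ((↑) : ℤ_[p] → ℚ_[p]) hθ
    simpa [mordellCurve, sub_eq_add_neg] using this
  refine ⟨xSubChar (mordellCurve_cubic_ne_zero hcube) hθ' (padicQuadraticChar p),
    fun a d y h hd hne ↦ padicQuadraticChar_eq_legendreSym hθ₀ hne ?_⟩
  have hd' : (d : ℚ_[p]) ≠ 0 := mod_cast hd
  rw [Units.val_mk0, xSub_some]
  simp only [map_div₀, map_pow, map_intCast]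
  field_simp

lemma linearIndependent_of_legendreSym_triangular {ι : Type*} [LinearOrder ι]
    (hcube : ∀ q : ℚ, q ^ 3 ≠ k) {p : ι → ℕ} [∀ j, Fact (p j).Prime] {θ a d : ι → ℤ}
    (hroot : ∀ j, (p j : ℤ) ∣ θ j ^ 3 - k) (hsimple : ∀ j, ¬ (p j : ℤ) ∣ 3 * θ j ^ 2)
    (hd : ∀ i, d i ≠ 0) {y : ι → ℚ}
    (h : ∀ i, (mordellCurve k).toAffine.Nonsingular (a i / d i ^ 2 : ℚ) (y i))
    (hlt : ∀ i j, j < i → legendreSym (p j) (a i - θ j * d i ^ 2) = 1)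
    (hdiag : ∀ i, legendreSym (p i) (a i - θ i * d i ^ 2) = -1) :
    LinearIndependent ℤ fun i ↦ some _ (y i) (h i) := by
  choose φ hφ using fun j ↦ exists_addMonoidHom_eq_legendreSym hcube (hroot j) (hsimple j)
  refine linearIndependent_int_of_linearIndependent_zmod one_lt_two
    (fun _ ↦ eq_zero_of_two_nsmul_eq_zero two_ne_zero (mordellCurve_cubic_ne_zero hcube))
    (AddMonoidHom.pi φ) (linearIndependent_of_triangular (fun i j hij ↦ ?_) fun i h0 ↦ ?_)
  · have := hφ j (a i) (d i) (y i) (h i) (hd i) (by simp [hlt i j hij])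
    rw [hlt i j hij] at this
    exact congrArg Additive.ofMul (Units.ext this)
  · have := hφ i (a i) (d i) (y i) (h i) (hd i) (by simp [hdiag i])
    rw [hdiag i] at this
    change φ i _ = 0 at h0
    simp [h0] at this

end IndependenceCriterion

section ElkiesCurve

/-- The constant of Elkies' curve `y² = x³ - k`, whose Mordell–Weil group has rank at
least `17`. -/
def elkiesConst : ℤ := 908800736629952526116772283648363

/-- Triples `(a, d, b)` such that the points `(a / d², b / d³)` of Elkies' curve are independent.
Their order and the primes in `elkiesPrime` were found by computer search. -/
def elkiesTriple : Fin 17 → ℤ × ℤ × ℤ :=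
  ![(128158333619, 1, 34585304799609464),
    (451261814159, 1, 301637038193593646),
    (2396206618849, 4, 3167981393256701649),
    (9667288363297, 4, 29995802072568388815),
    (3962298565667, 1, 7887105016439144260),
    (111571430819, 1, 21910293993306164),
    (262759574698993, 4, 4259295591800504907447),
    (746933985426451, 17, 20413238017198977735048),
    (417862630293377, 8, 8541803794891018024769),
    (1320696423793, 2, 1498481571547803945),
    (5653350982129, 4, 13302660738903251529),
    (197517823667, 1, 82444038776831560),
    (28113077519951, 17, 16816460783428075702),
    (13027248617599, 9, 41567656345749928846),
    (113004875484289, 34, 197899929320145653919),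
    (79643570239363, 17, 695162393220696158340),
    (120175606279879, 19, 1301092605052165276194)]

/-- Primes at which the `2`-descent characters of the points in `elkiesTriple` form a triangular
matrix. -/
def elkiesPrime : Fin 17 → ℕ :=
  ![797, 449, 673, 61, 1109, 359, 1009, 821, 547, 509, 37, 281, 1031, 1033, 227, 829, 5]

/-- Cube roots of `elkiesConst` modulo the primes in `elkiesPrime`. -/
def elkiesRoot : Fin 17 → ℤ :=
  ![577, 31, 497, 31, 492, 178, 165, 591, 32, 332, 11, 102, 249, 735, 182, 665, 2]

lemma cube_ne_elkiesConst (q : ℚ) : q ^ 3 ≠ elkiesConst := by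
  intro h
  obtain ⟨z, rfl⟩ : ∃ z : ℤ, (z : ℚ) = q :=
    IsIntegrallyClosed.exists_algebraMap_eq_of_isIntegral_pow three_pos
      (h ▸ isIntegral_algebraMap)
  have cube_ne : ∀ z : ZMod 7, z ^ 3 ≠ elkiesConst := by decide
  exact cube_ne z (mod_cast congrArg (Int.cast (R := ZMod 7)) (mod_cast h : z ^ 3 = elkiesConst))

instance (j : Fin 17) : Fact (elkiesPrime j).Prime :=
  ⟨by fin_cases j <;> norm_num [elkiesPrime]⟩

lemma elkiesTriple_sq (i : Fin 17) : (elkiesTriple i).2.2 ^ 2 =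
    (elkiesTriple i).1 ^ 3 - elkiesConst * (elkiesTriple i).2.1 ^ 6 := by
  decide +kernel +revert

lemma elkiesTriple_den_ne_zero (i : Fin 17) : (elkiesTriple i).2.1 ≠ 0 := by
  decide +revert

lemma nonsingular_elkiesTriple (i : Fin 17) :
    (mordellCurve elkiesConst).toAffine.Nonsingular
      ((elkiesTriple i).1 / (elkiesTriple i).2.1 ^ 2 : ℚ)
      ((elkiesTriple i).2.2 / (elkiesTriple i).2.1 ^ 3 : ℚ) := by
  have := isElliptic_mordellCurve (k := elkiesConst) (by decide)
  rw [← equation_iff_nonsingular, mordellCurve_equation_iff]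
  have hsq : ((elkiesTriple i).2.2 : ℚ) ^ 2 =
      (elkiesTriple i).1 ^ 3 - elkiesConst * (elkiesTriple i).2.1 ^ 6 := mod_cast elkiesTriple_sq i
  have hd : ((elkiesTriple i).2.1 : ℚ) ≠ 0 := mod_cast elkiesTriple_den_ne_zero i
  field_simp
  linear_combination hsq

/-- The points of Elkies' curve with coordinates `elkiesTriple`. -/
def elkiesPoint (i : Fin 17) : (mordellCurve elkiesConst).toAffine.Point :=
  some _ _ (nonsingular_elkiesTriple i)

lemma elkiesPrime_dvd_elkiesRoot_cube_sub (j : Fin 17) :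
    (elkiesPrime j : ℤ) ∣ elkiesRoot j ^ 3 - elkiesConst := by
  decide +kernel +revert

lemma not_elkiesPrime_dvd_three_mul_elkiesRoot_sq (j : Fin 17) :
    ¬ (elkiesPrime j : ℤ) ∣ 3 * elkiesRoot j ^ 2 := by
  decide +kernel +revert

lemma legendreSym_elkiesPrime_of_lt (i j : Fin 17) (hij : j < i) :
    legendreSym (elkiesPrime j) ((elkiesTriple i).1 - elkiesRoot j * (elkiesTriple i).2.1 ^ 2) =
      1 := by
  decide +kernel +revert

lemma legendreSym_elkiesPrime_self (i : Fin 17) :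
    legendreSym (elkiesPrime i) ((elkiesTriple i).1 - elkiesRoot i * (elkiesTriple i).2.1 ^ 2) =
      -1 := by
  decide +kernel +revert

lemma linearIndependent_elkiesPoint : LinearIndependent ℤ elkiesPoint :=
  linearIndependent_of_legendreSym_triangular cube_ne_elkiesConst
    elkiesPrime_dvd_elkiesRoot_cube_sub not_elkiesPrime_dvd_three_mul_elkiesRoot_sq
    elkiesTriple_den_ne_zero nonsingular_elkiesTriple legendreSym_elkiesPrime_of_lt
    legendreSym_elkiesPrime_self

end ElkiesCurve

section Discriminant

/-- The coefficients of the binary cubic form `F(px + qy, rx + sy)`. -/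
def cubicSubst (F : ℤ × ℤ × ℤ × ℤ) (p q r s : ℤ) : ℤ × ℤ × ℤ × ℤ :=
  let (a, b, c, d) := F
  (a * p ^ 3 + b * p ^ 2 * r + c * p * r ^ 2 + d * r ^ 3,
    3 * a * p ^ 2 * q + b * (p ^ 2 * s + 2 * p * q * r) + c * (r ^ 2 * q + 2 * p * r * s) +
      3 * d * r ^ 2 * s,
    3 * a * p * q ^ 2 + b * (q ^ 2 * r + 2 * p * q * s) + c * (s ^ 2 * p + 2 * q * r * s) +
      3 * d * r * s ^ 2,
    a * q ^ 3 + b * q ^ 2 * s + c * q * s ^ 2 + d * s ^ 3)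

lemma cubicVal_cubicSubst (F : ℤ × ℤ × ℤ × ℤ) (p q r s x y : ℤ) :
    cubicVal (cubicSubst F p q r s) x y = cubicVal F (p * x + q * y) (r * x + s * y) := by
  simp only [cubicVal, cubicSubst]
  ring

lemma cubicDisc_cubicSubst (F : ℤ × ℤ × ℤ × ℤ) (p q r s : ℤ) :
    cubicDisc (cubicSubst F p q r s) = (p * s - q * r) ^ 6 * cubicDisc F := by
  simp only [cubicDisc, cubicSubst]
  ring

lemma cubicVal_injective : Function.Injective cubicVal := by
  rintro ⟨a, b, c, d⟩ ⟨a', b', c', d'⟩ h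
  have hval (x y : ℤ) := congrFun₂ h x y
  have h10 := hval 1 0
  have h01 := hval 0 1
  have h11 := hval 1 1
  have h1n := hval 1 (-1)
  simp only [cubicVal] at h10 h01 h11 h1n
  simp only [Prod.mk.injEq]
  omega

lemma cubicDisc_eq_of_cubicEquiv {F F' : ℤ × ℤ × ℤ × ℤ} (h : cubicEquiv F F') :
    cubicDisc F = cubicDisc F' := by
  obtain ⟨p, q, r, s, hdet, hval⟩ := h
  obtain rfl : F' = cubicSubst F p q r s :=
    cubicVal_injective (funext₂ fun x y ↦ by rw [hval, cubicVal_cubicSubst])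
  rw [cubicDisc_cubicSubst]
  rcases hdet with hdet | hdet <;> simp [hdet]

lemma cubicContent_mordellForm (k : ℤ) (t : ℕ) : cubicContent (mordellForm k t) = 1 := by
  simp [cubicContent, mordellForm]

lemma cubicDisc_mordellForm (k : ℤ) (t : ℕ) : cubicDisc (mordellForm k t) = -4 * k * t ^ 2 := by
  simp only [cubicDisc, mordellForm]
  ring

variable {k : ℤ}

lemma cubicDisc_mordellForm_ne_zero (hk : k ≠ 0) {t : ℕ} (ht : t ≠ 0) :
    cubicDisc (mordellForm k t) ≠ 0 := by
  simp [cubicDisc_mordellForm, hk, ht]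

lemma cubicDisc_mordellForm_injective (hk : k ≠ 0) :
    Function.Injective fun t ↦ cubicDisc (mordellForm k t) := by
  intro t t' h
  simp only [cubicDisc_mordellForm] at h
  have hsq : (t : ℤ) ^ 2 = t' ^ 2 := mul_left_cancel₀ (by simpa) h
  exact_mod_cast (sq_eq_sq₀ t.cast_nonneg t'.cast_nonneg).1 hsq

end Discriminant

/-- There are infinitely many pairwise `GL₂(ℤ)`-inequivalent binary cubic forms of
content `1` and nonzero discriminant such that, for each such form `F`, there is a
constant `c₀ > 0` with `N_F(m) > c₀·(log m)^{17/19}` for infinitely many positive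
integers `m`. -/
theorem stmt_18 :
    ∃ S : Set (ℤ × ℤ × ℤ × ℤ), S.Infinite ∧
      (∀ F ∈ S, ∀ F' ∈ S, F ≠ F' → ¬ cubicEquiv F F') ∧
      (∀ F ∈ S, cubicContent F = 1 ∧ cubicDisc F ≠ 0 ∧
        ∃ c₀ : ℝ, 0 < c₀ ∧
          {m : ℕ | 0 < m ∧
            c₀ * Real.log m ^ ((17 : ℝ) / 19) < (numReps F m : ℝ)}.Infinite) := by
  have hk : 0 < elkiesConst := by decide
  have hinj := cubicDisc_mordellForm_injective hk.ne'
  refine ⟨mordellForm elkiesConst '' {t | t ≠ 0}, ?_, ?_, ?_⟩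
  · refine Set.Infinite.image (fun t _ t' _ h ↦ hinj (congrArg cubicDisc h)) ?_
    exact (Set.finite_singleton 0).infinite_compl
  · rintro _ ⟨t, -, rfl⟩ _ ⟨t', -, rfl⟩ hne hequiv
    exact hne (congrArg _ (hinj (cubicDisc_eq_of_cubicEquiv hequiv)))
  · rintro _ ⟨t, ht, rfl⟩
    refine ⟨cubicContent_mordellForm _ t, cubicDisc_mordellForm_ne_zero hk.ne' ht, ?_⟩
    simpa only [Fintype.card_fin, Nat.reduceAdd, Nat.cast_ofNat] using
      exists_infinite_mul_log_rpow_lt_numReps_mordellForm hk linearIndependent_elkiesPoint ht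
end
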